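/- (Theorem 23) Let 0 < θ, θ₀ < 1, 0 < q₀, r, r₀, r₁ ≤ ∞, a, b₀, b₁, a₀ ∈ SV, ‖s^{-1/r₀} b₀(s)/a₀(s)‖_{r₀,(0,1)} < ∞, and ‖s^{-1/r₁} b₁(s)‖_{r₁,(0,1)} < ∞. Put c₀(t) = a₀(t) ‖s^{-1/r₀} b₀(s)/a₀(s)‖_{r₀,(0,t)}, c₁(t) = ‖s^{-1/r₁} b₁(s)‖_{r₁,(0,t)}, and ρ(t) = t^{1-θ₀} c₀(t)/c₁(t). Then (Ā^𝓡_{θ₀,r₀,b₀,q₀,a₀}, Ā_{1,r₁;b₁})_{θ,r;a} ≅ Ā_{η,r;a^#}, where η = (1-θ)θ₀ + θ and a^#(t) = c₀(t)^{1-θ} c₁(t)^θ a(ρ(t)). -/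

import Mathlib

open MeasureTheory Set ENNReal Filter

noncomputable section

/-- The `L_q` quasi-norm (with respect to Lebesgue measure) of an `ℝ≥0∞`-valued
function over a set of reals; for `q = ∞` it is the essential supremum. -/
def LqNorm (q : ℝ≥0∞) (s : Set ℝ) (g : ℝ → ℝ≥0∞) : ℝ≥0∞ :=
  if q = ∞ then essSup g (volume.restrict s)
  else (∫⁻ t in s, g t ^ q.toReal) ^ q⁻¹.toReal

/-- The weight `s ↦ s ^ (-1/r) * b s`, as an `ℝ≥0∞`-valued function
(`1/∞ = 0` by convention). -/
def svWgt (r : ℝ≥0∞) (b : ℝ → ℝ) : ℝ → ℝ≥0∞ :=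
  fun s => ENNReal.ofReal (s ^ (-(r⁻¹.toReal)) * b s)

/-- `f` and `g` are equivalent on `s`: each is bounded by a constant multiple
of the other there. -/
def EquivOn (s : Set ℝ) (f g : ℝ → ℝ) : Prop :=
  ∃ C : ℝ, 0 < C ∧ ∀ t ∈ s, C⁻¹ * g t ≤ f t ∧ f t ≤ C * g t

/-- A positive measurable function `b` on `(0,∞)` is slowly varying if for every
`ε > 0`, `t ^ ε * b t` is equivalent to a non-decreasing function and
`t ^ (-ε) * b t` is equivalent to a non-increasing function. -/
def SlowlyVarying (b : ℝ → ℝ) : Prop :=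
  AEMeasurable b (volume.restrict (Ioi 0)) ∧ (∀ t ∈ Ioi (0:ℝ), 0 < b t) ∧
    ∀ ε : ℝ, 0 < ε →
      (∃ g : ℝ → ℝ, MonotoneOn g (Ioi 0) ∧ EquivOn (Ioi 0) (fun t => t ^ ε * b t) g) ∧
      (∃ g : ℝ → ℝ, AntitoneOn g (Ioi 0) ∧ EquivOn (Ioi 0) (fun t => t ^ (-ε) * b t) g)

/-- A quasi-Banach space continuously embedded into the ambient (Hausdorff) space `E`,
recorded via its extended-real-valued quasi-norm; the space itself is the set of
vectors of finite quasi-norm. -/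
structure QuasiBanach (E : Type*) [AddCommGroup E] [Module ℝ E] where
  N : E → ℝ≥0∞
  zero : N 0 = 0
  definite : ∀ x, N x = 0 → x = 0
  smul : ∀ (c : ℝ) (x : E), N (c • x) = ENNReal.ofReal |c| * N x
  quasi : ∃ C : ℝ≥0∞, 1 ≤ C ∧ C ≠ ∞ ∧ ∀ x y, N (x + y) ≤ C * (N x + N y)
  complete : ∀ f : ℕ → E,
    (∀ ε : ℝ≥0∞, 0 < ε → ∃ M : ℕ, ∀ m ≥ M, ∀ n ≥ M, N (f m - f n) < ε) →
    (∀ n, N (f n) ≠ ∞) →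
    ∃ g : E, N g ≠ ∞ ∧ Tendsto (fun n => N (f n - g)) atTop (nhds 0)

variable {E : Type*} [AddCommGroup E] [Module ℝ E]

/-- The Peetre K-functional of the couple whose quasi-norms are `N₀`, `N₁`. -/
def Kf (N₀ N₁ : E → ℝ≥0∞) (t : ℝ) (f : E) : ℝ≥0∞ :=
  ⨅ g : E, N₀ g + ENNReal.ofReal t * N₁ (f - g)

/-- The quasi-norm of the real interpolation space `Ā_{θ,q;b}`. -/
def normK (N₀ N₁ : E → ℝ≥0∞) (θ : ℝ) (q : ℝ≥0∞) (b : ℝ → ℝ) (f : E) : ℝ≥0∞ :=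
  LqNorm q (Ioi 0) fun u =>
    ENNReal.ofReal (u ^ (-θ - q⁻¹.toReal) * b u) * Kf N₀ N₁ u f

/-- The quasi-norm of the limiting interpolation space `Ā^𝓛_{σ,r,b,q,a}`. -/
def normL (N₀ N₁ : E → ℝ≥0∞) (σ : ℝ) (r q : ℝ≥0∞) (b a : ℝ → ℝ) (f : E) : ℝ≥0∞ :=
  LqNorm r (Ioi 0) fun t =>
    ENNReal.ofReal (t ^ (-(r⁻¹.toReal)) * (b t / a t)) *
      LqNorm q (Ioo 0 t) fun u =>
        ENNReal.ofReal (u ^ (-σ - q⁻¹.toReal) * a u) * Kf N₀ N₁ u f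

/-- The quasi-norm of the limiting interpolation space `Ā^𝓡_{σ,r,b,q,a}`. -/
def normR (N₀ N₁ : E → ℝ≥0∞) (σ : ℝ) (r q : ℝ≥0∞) (b a : ℝ → ℝ) (f : E) : ℝ≥0∞ :=
  LqNorm r (Ioi 0) fun t =>
    ENNReal.ofReal (t ^ (-(r⁻¹.toReal)) * (b t / a t)) *
      LqNorm q (Ioi t) fun u =>
        ENNReal.ofReal (u ^ (-σ - q⁻¹.toReal) * a u) * Kf N₀ N₁ u f

/-- Two (extended-real-valued) quasi-norms define the same space with
equivalent quasi-norms. -/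
def EquivNorms (nX nY : E → ℝ≥0∞) : Prop :=
  ∃ C : ℝ≥0∞, 0 < C ∧ C ≠ ∞ ∧ ∀ f : E, C⁻¹ * nY f ≤ nX f ∧ nX f ≤ C * nY f


/-- Discrete `ℓ_q` quasi-norm on `ℤ`. -/
def ell (q : ℝ≥0∞) (x : ℤ → ℝ≥0∞) : ℝ≥0∞ :=
  if q = ∞ then ⨆ i, x i else (∑' i, x i ^ q.toReal) ^ q⁻¹.toReal

lemma ell_top (x : ℤ → ℝ≥0∞) : ell ∞ x = ⨆ i, x i := by simp [ell]

lemma ell_fin {q : ℝ≥0∞} (hq : q ≠ ∞) (x : ℤ → ℝ≥0∞) :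
    ell q x = (∑' i, x i ^ q.toReal) ^ (q.toReal)⁻¹ := by
  simp [ell, hq, ENNReal.toReal_inv]

lemma ell_fin_rpow {q : ℝ≥0∞} (h0 : 0 < q) (hq : q ≠ ∞) (x : ℤ → ℝ≥0∞) :
    ell q x ^ q.toReal = ∑' i, x i ^ q.toReal := by
  have : 0 < q.toReal := ENNReal.toReal_pos h0.ne' hq
  rw [ell_fin hq, ENNReal.rpow_inv_rpow this.ne']

lemma ell_mono {q : ℝ≥0∞} {x y : ℤ → ℝ≥0∞} (h : ∀ i, x i ≤ y i) : ell q x ≤ ell q y := by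
  unfold ell
  split_ifs with hq
  · exact iSup_mono h
  · exact ENNReal.rpow_le_rpow (ENNReal.tsum_le_tsum fun i =>
      ENNReal.rpow_le_rpow (h i) ENNReal.toReal_nonneg) ENNReal.toReal_nonneg

lemma ell_const_mul {q : ℝ≥0∞} (h0 : 0 < q) (c : ℝ≥0∞) (x : ℤ → ℝ≥0∞) :
    ell q (fun i => c * x i) = c * ell q x := by
  by_cases hq : q = ∞
  · subst hq; simp only [ell_top, ENNReal.mul_iSup]
  · have : 0 < q.toReal := ENNReal.toReal_pos h0.ne' hq
    rw [ell_fin hq, ell_fin hq]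
    simp_rw [ENNReal.mul_rpow_of_nonneg _ _ this.le]
    rw [ENNReal.tsum_mul_left, ENNReal.mul_rpow_of_nonneg _ _ (by positivity),
      ENNReal.rpow_rpow_inv this.ne']

lemma ell_mul_const {q : ℝ≥0∞} (h0 : 0 < q) (c : ℝ≥0∞) (x : ℤ → ℝ≥0∞) :
    ell q (fun i => x i * c) = ell q x * c := by
  simp_rw [mul_comm _ c]; exact ell_const_mul h0 c x

lemma ell_shift (q : ℝ≥0∞) (n : ℤ) (x : ℤ → ℝ≥0∞) :
    ell q (fun i => x (i + n)) = ell q x := by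
  unfold ell
  split_ifs with hq
  · exact (Equiv.addRight n).iSup_comp (g := x)
  · congr 1
    exact (Equiv.addRight n).tsum_eq (fun i => x i ^ q.toReal)

lemma le_ell {q : ℝ≥0∞} (h0 : 0 < q) (x : ℤ → ℝ≥0∞) (i : ℤ) : x i ≤ ell q x := by
  by_cases hq : q = ∞
  · subst hq; rw [ell_top]; exact le_iSup x i
  · have : 0 < q.toReal := ENNReal.toReal_pos h0.ne' hq
    rw [ell_fin hq, ENNReal.le_rpow_inv_iff this]
    exact ENNReal.le_tsum i

lemma ell_le_ell {p q : ℝ≥0∞} (h0 : 0 < p) (hp : p ≠ ∞) (hpq : p ≤ q) (x : ℤ → ℝ≥0∞) :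
    ell q x ≤ ell p x := by
  by_cases hq : q = ∞
  · subst hq; rw [ell_top]; exact iSup_le (le_ell h0 x)
  · have hp0 : 0 < p.toReal := ENNReal.toReal_pos h0.ne' hp
    have hq0 : 0 < q.toReal := ENNReal.toReal_pos (h0.trans_le hpq).ne' hq
    have hle : p.toReal ≤ q.toReal := ENNReal.toReal_mono hq hpq
    rw [ell_fin hq, ENNReal.rpow_inv_le_iff hq0]
    set M := ell p x with hM
    calc ∑' i, x i ^ q.toReal ≤ ∑' i, M ^ (q.toReal - p.toReal) * x i ^ p.toReal := by
          refine ENNReal.tsum_le_tsum fun i => ?_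
          have : q.toReal = (q.toReal - p.toReal) + p.toReal := by ring
          conv_lhs => rw [this]
          rw [ENNReal.rpow_add_of_nonneg _ _ (by linarith) hp0.le]
          gcongr
          exact le_ell h0 x i
      _ = M ^ (q.toReal - p.toReal) * M ^ p.toReal := by
          rw [ENNReal.tsum_mul_left, hM, ell_fin_rpow h0 hp]
      _ = M ^ q.toReal := by
          rw [← ENNReal.rpow_add_of_nonneg _ _ (by linarith) hp0.le]; congr 1; ring

lemma ell_add {q : ℝ≥0∞} (h0 : 0 < q) : ∃ C : ℝ≥0∞, C ≠ ∞ ∧ ∀ x y : ℤ → ℝ≥0∞,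
    ell q (fun i => x i + y i) ≤ C * (ell q x + ell q y) := by
  by_cases hq : q = ∞
  · subst hq
    refine ⟨1, by simp, fun x y => ?_⟩
    simp only [ell_top, one_mul]
    exact iSup_le fun i => add_le_add (le_iSup x i) (le_iSup y i)
  · have hq0 : 0 < q.toReal := ENNReal.toReal_pos h0.ne' hq
    refine ⟨2 * 2 ^ (q.toReal)⁻¹, by
      refine ENNReal.mul_ne_top (by simp) (ENNReal.rpow_ne_top_of_nonneg (by positivity) (by simp)),
      fun x y => ?_⟩
    have h1 : ∀ u v : ℝ≥0∞, ∀ s : ℝ, 0 ≤ s → (max u v) ^ s ≤ u ^ s + v ^ s := by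
      intro u v s hs
      rcases le_total u v with h | h
      · rw [max_eq_right h]; exact le_add_self
      · rw [max_eq_left h]; exact le_self_add
    have h2 : ∀ u v : ℝ≥0∞, u + v ≤ 2 * max u v := by
      intro u v; rw [two_mul]; exact add_le_add (le_max_left _ _) (le_max_right _ _)
    calc ell q (fun i => x i + y i) ≤ ell q (fun i => 2 * max (x i) (y i)) :=
          ell_mono fun i => h2 _ _
      _ = 2 * ell q (fun i => max (x i) (y i)) := ell_const_mul h0 _ _
      _ ≤ 2 * (2 ^ (q.toReal)⁻¹ * (ell q x + ell q y)) := by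
          gcongr
          rw [ell_fin hq, ell_fin hq, ell_fin hq]
          set X := ∑' i, x i ^ q.toReal
          set Y := ∑' i, y i ^ q.toReal
          calc (∑' i, max (x i) (y i) ^ q.toReal) ^ (q.toReal)⁻¹ ≤ (X + Y) ^ (q.toReal)⁻¹ := by
                refine ENNReal.rpow_le_rpow ?_ (by positivity)
                rw [← ENNReal.tsum_add]
                exact ENNReal.tsum_le_tsum fun i => h1 _ _ _ hq0.le
            _ ≤ (2 * max X Y) ^ (q.toReal)⁻¹ := ENNReal.rpow_le_rpow (h2 _ _) (by positivity)
            _ = 2 ^ (q.toReal)⁻¹ * (max X Y) ^ (q.toReal)⁻¹ :=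
                ENNReal.mul_rpow_of_nonneg _ _ (by positivity)
            _ ≤ _ := by gcongr; exact h1 _ _ _ (by positivity)
      _ = _ := by ring

lemma minkowski_aux {s : ℝ} (hs : 1 ≤ s) (y : ℤ → ℤ → ℝ≥0∞) (G F : Finset ℤ) :
    (∑ i ∈ G, (∑ k ∈ F, y i k) ^ s) ^ s⁻¹ ≤ ∑ k ∈ F, (∑ i ∈ G, y i k ^ s) ^ s⁻¹ := by
  have hs0 : 0 < s := by linarith
  classical
  induction F using Finset.induction_on with
  | empty => simp [ENNReal.zero_rpow_of_pos, hs0]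
  | insert k F hk ih =>
    simp_rw [Finset.sum_insert hk]
    refine le_trans ?_ (add_le_add le_rfl ih)
    have := ENNReal.Lp_add_le G (fun i => y i k) (fun i => ∑ k ∈ F, y i k) hs
    simpa [one_div] using this

lemma minkowski_tsum {s : ℝ} (hs : 1 ≤ s) (y : ℤ → ℤ → ℝ≥0∞) :
    (∑' i, (∑' k, y i k) ^ s) ^ s⁻¹ ≤ ∑' k, (∑' i, y i k ^ s) ^ s⁻¹ := by
  have hs0 : 0 < s := by linarith
  rw [ENNReal.rpow_inv_le_iff hs0]
  rw [ENNReal.tsum_eq_iSup_sum]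
  refine iSup_le fun G => ?_
  have ht : Tendsto (fun F : Finset ℤ => ∑ i ∈ G, (∑ k ∈ F, y i k) ^ s) atTop
      (nhds (∑ i ∈ G, (∑' k, y i k) ^ s)) := by
    refine tendsto_finsetSum _ fun i _ => ?_
    exact (ENNReal.continuous_rpow_const.tendsto _).comp (ENNReal.summable.hasSum)
  refine le_of_tendsto' ht fun F => ?_
  rw [← ENNReal.rpow_inv_le_iff hs0]
  refine (minkowski_aux hs y G F).trans ?_
  refine le_trans (Finset.sum_le_sum fun k _ => ?_) (ENNReal.sum_le_tsum F)
  exact ENNReal.rpow_le_rpow (ENNReal.sum_le_tsum G) (by positivity)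

lemma ell_minkowski {p r : ℝ≥0∞} (h0 : 0 < p) (hp : p ≠ ∞) (hpr : p ≤ r)
    (x : ℤ → ℤ → ℝ≥0∞) :
    ell r (fun i => ell p (fun k => x i k)) ≤ ell p (fun k => ell r (fun i => x i k)) := by
  have hp0 : 0 < p.toReal := ENNReal.toReal_pos h0.ne' hp
  have hr0 := h0.trans_le hpr
  by_cases hr : r = ∞
  · subst hr
    rw [ell_top]
    exact iSup_le fun i => ell_mono fun k => le_ell hr0 (fun i => x i k) i
  · have hr1 : 0 < r.toReal := ENNReal.toReal_pos hr0.ne' hr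
    have hle : p.toReal ≤ r.toReal := ENNReal.toReal_mono hr hpr
    set s := r.toReal / p.toReal with hs
    have hs1 : 1 ≤ s := by rw [hs, le_div_iff₀ hp0]; linarith
    have hs0 : 0 < s := by linarith
    have := minkowski_tsum hs1 (fun i k => x i k ^ p.toReal)
    simp only [ell_fin hr, ell_fin hp]
    rw [ENNReal.le_rpow_inv_iff hp0]
    convert this using 1
    · rw [← ENNReal.rpow_mul]
      congr 1
      · refine tsum_congr fun i => ?_
        rw [← ENNReal.rpow_mul]; congr 1; rw [hs]; field_simp
      · rw [hs]; field_simp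
    · refine tsum_congr fun k => ?_
      rw [← ENNReal.rpow_mul]
      congr 1
      · refine tsum_congr fun i => ?_
        rw [← ENNReal.rpow_mul]; congr 1; rw [hs]; field_simp
      · rw [hs]; field_simp

lemma ell_fiber {q : ℝ≥0∞} (h0 : 0 < q) (κ : ℤ → ℤ) (N : ℕ)
    (hκ : ∀ i j, κ i = κ j → i ≤ j + N) : ∃ C : ℝ≥0∞, C ≠ ∞ ∧ ∀ x : ℤ → ℝ≥0∞,
    ell q (fun i => x (κ i)) ≤ C * ell q x := by
  by_cases hq : q = ∞
  · subst hq
    refine ⟨1, by simp, fun x => ?_⟩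
    simp only [ell_top, one_mul]
    exact iSup_le fun i => le_iSup x (κ i)
  · have hq0 : 0 < q.toReal := ENNReal.toReal_pos h0.ne' hq
    set M : ℝ≥0∞ := ((2 * N + 1 : ℕ) : ℝ≥0∞)
    refine ⟨M ^ (q.toReal)⁻¹, ENNReal.rpow_ne_top_of_nonneg (by positivity) (ENNReal.natCast_ne_top _),
      fun x => ?_⟩
    rw [ell_fin hq, ell_fin hq, ← ENNReal.mul_rpow_of_nonneg _ _ (by positivity)]
    refine ENNReal.rpow_le_rpow ?_ (by positivity)
    classical
    have hcount : ∀ k, ∑' i, (if k = κ i then (1 : ℝ≥0∞) else 0) ≤ M := by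
      intro k
      by_cases hk : ∃ j, k = κ j
      · obtain ⟨j, hj⟩ := hk
        rw [tsum_eq_sum (s := Finset.Icc (j - N) (j + N))]
        · refine (Finset.sum_le_card_nsmul _ _ 1 fun i _ => by split_ifs <;> simp).trans ?_
          rw [Int.card_Icc]
          simp only [nsmul_eq_mul, mul_one, M]
          have : (j + (N : ℤ) + 1 - (j - N)).toNat = 2 * N + 1 := by omega
          rw [this]
        · intro i hi
          rw [if_neg]
          intro h
          apply hi
          have h1 := hκ i j (by rw [← h, ← hj])
          have h2 := hκ j i (by rw [← h, ← hj])
          rw [Finset.mem_Icc]; constructor <;> linarith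
      · push Not at hk
        simp [hk]
    calc ∑' i, x (κ i) ^ q.toReal
        = ∑' i, ∑' k, (if k = κ i then 1 else 0) * x k ^ q.toReal := by
          refine tsum_congr fun i => ?_
          rw [tsum_eq_single (κ i)]
          · simp
          · intro k hk; simp [hk]
      _ = ∑' k, ∑' i, (if k = κ i then 1 else 0) * x k ^ q.toReal := ENNReal.tsum_comm
      _ ≤ ∑' k, M * x k ^ q.toReal := by
          refine ENNReal.tsum_le_tsum fun k => ?_
          rw [ENNReal.tsum_mul_right]
          gcongr
          exact hcount k
      _ = _ := ENNReal.tsum_mul_left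

lemma ell_geom {q : ℝ≥0∞} (h0 : 0 < q) (hq : q ≠ ∞) {δ : ℝ} (hδ : 0 < δ) :
    ell q (fun m => ENNReal.ofReal ((2 : ℝ) ^ (-δ * |(m : ℝ)|))) ≠ ∞ := by
  have hq0 : 0 < q.toReal := ENNReal.toReal_pos h0.ne' hq
  rw [ell_fin hq]
  refine ENNReal.rpow_ne_top_of_nonneg (by positivity) ?_
  have h1 : ∀ m : ℤ, ENNReal.ofReal ((2 : ℝ) ^ (-δ * |(m : ℝ)|)) ^ q.toReal
      = ENNReal.ofReal ((2 : ℝ) ^ (-δ * |(m : ℝ)| * q.toReal)) := by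
    intro m
    rw [ENNReal.ofReal_rpow_of_pos (by positivity), ← Real.rpow_mul (by positivity)]
  simp_rw [h1]
  refine Summable.tsum_ofReal_ne_top ?_
  have hs : Summable fun n : ℕ => (2 : ℝ) ^ (-δ * (n : ℝ) * q.toReal) := by
    have : (fun n : ℕ => (2 : ℝ) ^ (-δ * (n : ℝ) * q.toReal))
        = fun n : ℕ => ((2 : ℝ) ^ (-(δ * q.toReal))) ^ n := by
      funext n
      rw [← Real.rpow_natCast, ← Real.rpow_mul (by positivity)]
      congr 1; ring
    rw [this]
    refine summable_geometric_of_lt_one (by positivity) ?_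
    exact Real.rpow_lt_one_of_one_lt_of_neg (by norm_num) (by have := mul_pos hδ hq0; linarith)
  refine Summable.of_nat_of_neg ?_ ?_
  · simpa using hs
  · simpa using hs

/-- Young-type inequality with a geometric kernel. -/
lemma ell_young {p r : ℝ≥0∞} (h0 : 0 < p) (hp : p ≠ ∞) (hpr : p ≤ r) {δ : ℝ} (hδ : 0 < δ) :
    ∃ C : ℝ≥0∞, C ≠ ∞ ∧ ∀ v : ℤ → ℝ≥0∞,
      ell r (fun j => ell p (fun k =>
        ENNReal.ofReal ((2 : ℝ) ^ (-δ * |((k - j : ℤ) : ℝ)|)) * v k)) ≤ C * ell r v := by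
  refine ⟨_, ell_geom h0 hp hδ, fun v => ?_⟩
  have h1 : ∀ j, ell p (fun k => ENNReal.ofReal ((2 : ℝ) ^ (-δ * |((k - j : ℤ) : ℝ)|)) * v k)
      = ell p (fun m => ENNReal.ofReal ((2 : ℝ) ^ (-δ * |(m : ℝ)|)) * v (m + j)) := by
    intro j
    rw [← ell_shift p j]
    simp
  simp_rw [h1]
  refine (ell_minkowski h0 hp hpr _).trans ?_
  rw [← ell_mul_const h0]
  refine ell_mono fun m => ?_
  rw [ell_const_mul (h0.trans_le hpr)]
  gcongr
  have := ell_shift r m v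
  simp_rw [add_comm _ m] at this
  exact this.le

/-- dyadic interval -/
def dI (j : ℤ) : Set ℝ := Ico ((2 : ℝ) ^ j) (2 ^ (j + 1))

lemma dI_meas (j : ℤ) : MeasurableSet (dI j) := measurableSet_Ico

lemma two_zpow_pos (j : ℤ) : (0 : ℝ) < 2 ^ j := by positivity

lemma dI_pos {j : ℤ} {t : ℝ} (ht : t ∈ dI j) : 0 < t := (two_zpow_pos j).trans_le ht.1

lemma exists_dI {t : ℝ} (ht : 0 < t) : ∃ j, t ∈ dI j :=
  exists_mem_Ico_zpow ht (by norm_num)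

lemma dI_vol (j : ℤ) : volume (dI j) = ENNReal.ofReal (2 ^ j) := by
  rw [dI, Real.volume_Ico, zpow_add_one₀ (by norm_num)]
  congr 1; ring

lemma dI_disj : Pairwise (Function.onFun Disjoint dI) := by
  intro i j hij
  refine Set.disjoint_left.2 fun t hi hj => hij ?_
  have key : ∀ i j : ℤ, t ∈ dI i → t ∈ dI j → i ≤ j := by
    intro i j hi hj
    by_contra hc
    push Not at hc
    have h1 : (2 : ℝ) ^ (j + 1) ≤ 2 ^ i := zpow_le_zpow_right₀ (by norm_num) (by omega)
    linarith [hi.1, hj.2]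
  exact le_antisymm (key i j hi hj) (key j i hj hi)

lemma dI_le_of_lt {i j : ℤ} {s t : ℝ} (hs : s ∈ dI i) (ht : t ∈ dI j) (h : s < t) : i ≤ j := by
  by_contra hc
  push Not at hc
  have h1 : (2 : ℝ) ^ (j + 1) ≤ 2 ^ i := zpow_le_zpow_right₀ (by norm_num) (by omega)
  linarith [hs.1, ht.2]

lemma rpow_inv_bound {q : ℝ≥0∞} (h0 : 0 < q) (hq : q ≠ ∞) {t : ℝ} (ht : 0 < t) :
    ENNReal.ofReal (t ^ (-(q⁻¹.toReal))) ^ q.toReal = ENNReal.ofReal t⁻¹ := by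
  have hq0 : 0 < q.toReal := ENNReal.toReal_pos h0.ne' hq
  rw [ENNReal.ofReal_rpow_of_pos (by positivity), ← Real.rpow_mul ht.le, ENNReal.toReal_inv]
  congr 1
  rw [neg_mul, inv_mul_cancel₀ hq0.ne', Real.rpow_neg_one]

lemma disc_upper {q : ℝ≥0∞} (h0 : 0 < q) {S : Set ℝ} (hSm : MeasurableSet S) (hS : S ⊆ Ioi 0)
    {h : ℝ → ℝ≥0∞} {x : ℤ → ℝ≥0∞} {C : ℝ≥0∞}
    (H : ∀ j, ∀ t ∈ dI j, t ∈ S → h t ≤ C * (ENNReal.ofReal (t ^ (-(q⁻¹.toReal))) * x j)) :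
    LqNorm q S h ≤ C * ell q x := by
  by_cases hq : q = ∞
  · subst hq
    simp only [LqNorm, if_true, ell_top]
    refine essSup_le_of_ae_le _ ?_
    refine (ae_restrict_iff' hSm).2 (Eventually.of_forall fun t ht => ?_)
    obtain ⟨j, hj⟩ := exists_dI (hS ht)
    refine (H j t hj ht).trans ?_
    refine mul_le_mul_right ?_ C
    simpa using le_iSup x j
  · have hq0 : 0 < q.toReal := ENNReal.toReal_pos h0.ne' hq
    rw [← ell_const_mul h0, ell_fin hq]
    simp only [LqNorm, if_neg hq, ENNReal.toReal_inv]
    refine ENNReal.rpow_le_rpow ?_ (by positivity)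
    have hcov : S ⊆ ⋃ j, (S ∩ dI j) := by
      intro t ht
      obtain ⟨j, hj⟩ := exists_dI (hS ht)
      exact mem_iUnion.2 ⟨j, ht, hj⟩
    refine (lintegral_mono_set hcov).trans ?_
    refine (lintegral_iUnion_le _ _).trans ?_
    refine ENNReal.tsum_le_tsum fun j => ?_
    calc ∫⁻ t in S ∩ dI j, h t ^ q.toReal
        ≤ ∫⁻ t in S ∩ dI j, ENNReal.ofReal ((2 ^ j)⁻¹) * (C * x j) ^ q.toReal := by
          refine setLIntegral_mono' (hSm.inter (dI_meas j)) fun t ht => ?_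
          have hpos := dI_pos ht.2
          calc h t ^ q.toReal
              ≤ (C * (ENNReal.ofReal (t ^ (-(q⁻¹.toReal))) * x j)) ^ q.toReal :=
                ENNReal.rpow_le_rpow (H j t ht.2 ht.1) hq0.le
            _ = ENNReal.ofReal t⁻¹ * (C * x j) ^ q.toReal := by
                rw [mul_left_comm, ENNReal.mul_rpow_of_nonneg _ _ hq0.le, rpow_inv_bound h0 hq hpos]
            _ ≤ _ := by
                gcongr
                · exact ht.2.1
      _ = ENNReal.ofReal ((2 ^ j)⁻¹) * (C * x j) ^ q.toReal * volume (S ∩ dI j) := by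
          rw [setLIntegral_const]
      _ ≤ ENNReal.ofReal ((2 ^ j)⁻¹) * (C * x j) ^ q.toReal * ENNReal.ofReal (2 ^ j) := by
          gcongr
          rw [← dI_vol]; exact measure_mono inter_subset_right
      _ = (C * x j) ^ q.toReal := by
          rw [mul_right_comm, ← ENNReal.ofReal_mul (by positivity),
            inv_mul_cancel₀ (two_zpow_pos j).ne']
          simp

lemma disc_lower {q : ℝ≥0∞} (h0 : 0 < q) {S : Set ℝ} {h : ℝ → ℝ≥0∞} {x : ℤ → ℝ≥0∞} {C : ℝ≥0∞}
    (hC : C ≠ ∞)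
    (H : ∀ j, x j ≠ 0 → dI j ⊆ S ∧
      ∀ t ∈ dI j, ENNReal.ofReal (t ^ (-(q⁻¹.toReal))) * x j ≤ C * h t) :
    ell q x ≤ 2 ^ (q⁻¹.toReal) * C * LqNorm q S h := by
  by_cases hq : q = ∞
  · subst hq
    simp only [LqNorm, if_true, ell_top]
    refine iSup_le fun j => ?_
    by_cases hj : x j = 0
    · simp [hj]
    obtain ⟨hsub, hb⟩ := H j hj
    have hne : volume.restrict (dI j) ≠ 0 := by
      rw [Ne, Measure.restrict_eq_zero, dI_vol]
      simpa using two_zpow_pos j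
    simp only [ENNReal.inv_top, ENNReal.toReal_zero, ENNReal.rpow_zero, one_mul, neg_zero,
      Real.rpow_zero, ENNReal.ofReal_one] at hb ⊢
    calc x j = essSup (fun _ : ℝ => x j) (volume.restrict (dI j)) := (essSup_const _ hne).symm
      _ ≤ essSup (fun t => C * h t) (volume.restrict (dI j)) := by
          refine essSup_mono_ae ?_
          exact (ae_restrict_iff' (dI_meas j)).2 (Eventually.of_forall fun t ht => hb t ht)
      _ = C * essSup h (volume.restrict (dI j)) := ENNReal.essSup_const_mul
      _ ≤ C * essSup h (volume.restrict S) := by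
          gcongr
          exact essSup_mono_measure' (Measure.restrict_mono hsub le_rfl)
  · have hq0 : 0 < q.toReal := ENNReal.toReal_pos h0.ne' hq
    have hCq : C ^ q.toReal ≠ ∞ := ENNReal.rpow_ne_top_of_nonneg hq0.le hC
    have h2C : 2 * C ^ q.toReal ≠ ∞ := ENNReal.mul_ne_top (by simp) hCq
    rw [ell_fin hq]
    simp only [LqNorm, if_neg hq, ENNReal.toReal_inv]
    rw [ENNReal.rpow_inv_le_iff hq0, ENNReal.mul_rpow_of_nonneg _ _ hq0.le,
      ENNReal.mul_rpow_of_nonneg _ _ hq0.le, ENNReal.rpow_inv_rpow hq0.ne',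
      ENNReal.rpow_inv_rpow hq0.ne']
    set J : Set ℤ := {j | x j ≠ 0}
    calc ∑' j, x j ^ q.toReal
        ≤ ∑' j, 2 * C ^ q.toReal * ∫⁻ t in (if x j = 0 then ∅ else dI j), h t ^ q.toReal := by
          refine ENNReal.tsum_le_tsum fun j => ?_
          by_cases hj : x j = 0
          · simp [hj, hq0]
          rw [if_neg hj]
          obtain ⟨hsub, hb⟩ := H j hj
          have hfull : ENNReal.ofReal ((2 ^ (j+1))⁻¹) * x j ^ q.toReal * ENNReal.ofReal (2 ^ j)
              ≤ C ^ q.toReal * ∫⁻ t in dI j, h t ^ q.toReal := by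
            rw [← dI_vol, ← setLIntegral_const, ← lintegral_const_mul' _ _ hCq]
            refine setLIntegral_mono' (dI_meas j) fun t ht => ?_
            have hpos := dI_pos ht
            have := ENNReal.rpow_le_rpow (hb t ht) hq0.le
            rw [ENNReal.mul_rpow_of_nonneg _ _ hq0.le, ENNReal.mul_rpow_of_nonneg _ _ hq0.le,
              rpow_inv_bound h0 hq hpos] at this
            refine le_trans ?_ this
            gcongr
            exact ht.2.le
          have he : ENNReal.ofReal ((2 ^ (j+1))⁻¹) * ENNReal.ofReal (2 ^ j) = 2⁻¹ := by
            rw [← ENNReal.ofReal_mul (by positivity), zpow_add_one₀ (by norm_num)]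
            have : ((2:ℝ) ^ j * 2)⁻¹ * 2 ^ j = 2⁻¹ := by
              have := (two_zpow_pos j).ne'
              field_simp
            rw [this, ENNReal.ofReal_inv_of_pos (by norm_num)]; simp
          rw [mul_right_comm, he] at hfull
          calc x j ^ q.toReal = 2 * (2⁻¹ * x j ^ q.toReal) := by
                rw [← mul_assoc, ENNReal.mul_inv_cancel (by simp) (by simp), one_mul]
            _ ≤ 2 * (C ^ q.toReal * ∫⁻ t in dI j, h t ^ q.toReal) := by gcongr
            _ = _ := by rw [mul_assoc]
      _ = 2 * C ^ q.toReal * ∫⁻ t in ⋃ j, (if x j = 0 then ∅ else dI j), h t ^ q.toReal := by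
          rw [ENNReal.tsum_mul_left, lintegral_iUnion]
          · intro j; split_ifs
            · exact MeasurableSet.empty
            · exact dI_meas j
          · intro i j hij
            simp only [Function.onFun]
            split_ifs
            · exact disjoint_bot_left
            · exact disjoint_bot_left
            · exact disjoint_bot_right
            · exact dI_disj hij
      _ ≤ _ := by
          gcongr
          refine iUnion_subset fun j => ?_
          split_ifs with hj
          · exact empty_subset _
          · exact (H j hj).1

set_option linter.unusedSectionVars false

lemma Kf_mono (N₀ N₁ : E → ℝ≥0∞) {s t : ℝ} (h : s ≤ t) (f : E) : Kf N₀ N₁ s f ≤ Kf N₀ N₁ t f := by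
  unfold Kf
  refine iInf_mono fun g => ?_
  gcongr

lemma Kf_scale (N₀ N₁ : E → ℝ≥0∞) {s t : ℝ} (hs : 0 < s) (h : s ≤ t) (f : E) :
    Kf N₀ N₁ t f ≤ ENNReal.ofReal (t / s) * Kf N₀ N₁ s f := by
  have hts : 0 < t / s := div_pos (hs.trans_le h) hs
  have h1 : 1 ≤ ENNReal.ofReal (t / s) := by
    rw [ENNReal.one_le_ofReal, le_div_iff₀ hs]; linarith
  unfold Kf
  rw [ENNReal.mul_iInf_of_ne (by simpa using hts) ENNReal.ofReal_ne_top]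
  refine iInf_mono fun g => ?_
  rw [mul_add, ← mul_assoc, ← ENNReal.ofReal_mul hts.le, div_mul_cancel₀ _ hs.ne']
  gcongr
  exact le_mul_of_one_le_left (zero_le) h1

lemma Kf_le_zero (A₀ A₁ : QuasiBanach E) (t : ℝ) (f : E) : Kf A₀.N A₁.N t f ≤ A₀.N f := by
  refine (iInf_le _ f).trans ?_
  simp [A₁.zero]

lemma Kf_le_one (A₀ A₁ : QuasiBanach E) (t : ℝ) (f : E) :
    Kf A₀.N A₁.N t f ≤ ENNReal.ofReal t * A₁.N f := by
  refine (iInf_le _ 0).trans ?_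
  simp [A₀.zero]

lemma Kf_quasi (A₀ A₁ : QuasiBanach E) : ∃ C : ℝ≥0∞, 1 ≤ C ∧ C ≠ ∞ ∧ ∀ (t : ℝ) (x y : E),
    Kf A₀.N A₁.N t (x + y) ≤ C * (Kf A₀.N A₁.N t x + Kf A₀.N A₁.N t y) := by
  obtain ⟨C₀, h10, hf0, hq0⟩ := A₀.quasi
  obtain ⟨C₁, h11, hf1, hq1⟩ := A₁.quasi
  have hC0 : max C₀ C₁ ≠ 0 := (zero_lt_one.trans_le (h10.trans (le_max_left _ _))).ne'
  have hCt : max C₀ C₁ ≠ ∞ := by simp [hf0, hf1]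
  refine ⟨max C₀ C₁, h10.trans (le_max_left _ _), hCt, fun t x y => ?_⟩
  have key : ∀ u v : E, Kf A₀.N A₁.N t (x + y) ≤
      max C₀ C₁ * ((A₀.N u + ENNReal.ofReal t * A₁.N (x - u)) +
        (A₀.N v + ENNReal.ofReal t * A₁.N (y - v))) := by
    intro u v
    refine (iInf_le _ (u + v)).trans ?_
    have e : x + y - (u + v) = (x - u) + (y - v) := by abel
    rw [e]
    calc A₀.N (u + v) + ENNReal.ofReal t * A₁.N ((x - u) + (y - v))
        ≤ max C₀ C₁ * (A₀.N u + A₀.N v)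
          + ENNReal.ofReal t * (max C₀ C₁ * (A₁.N (x - u) + A₁.N (y - v))) := by
          gcongr
          · exact (hq0 u v).trans (by gcongr; exact le_max_left _ _)
          · exact (hq1 _ _).trans (by gcongr; exact le_max_right _ _)
      _ = _ := by ring
  have hx : Kf A₀.N A₁.N t x = ⨅ u : E, A₀.N u + ENNReal.ofReal t * A₁.N (x - u) := rfl
  have hy : Kf A₀.N A₁.N t y = ⨅ u : E, A₀.N u + ENNReal.ofReal t * A₁.N (y - u) := rfl
  rw [hx, hy, ENNReal.iInf_add, ENNReal.mul_iInf_of_ne hC0 hCt]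
  refine le_iInf fun u => ?_
  rw [ENNReal.add_iInf, ENNReal.mul_iInf_of_ne hC0 hCt]
  exact le_iInf fun v => key u v

/-- Potter bounds. -/
def Pot (b : ℝ → ℝ) : Prop :=
  (∀ t, 0 < t → 0 < b t) ∧ ∀ ε : ℝ, 0 < ε → ∃ C : ℝ, 0 < C ∧ ∀ s t, 0 < s → 0 < t →
    b s ≤ C * max (s / t) (t / s) ^ ε * b t

lemma max_ratio_pos {s t : ℝ} (hs : 0 < s) (ht : 0 < t) : 0 < max (s / t) (t / s) :=
  lt_max_of_lt_left (div_pos hs ht)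

lemma SlowlyVarying.pot {b : ℝ → ℝ} (h : SlowlyVarying b) : Pot b := by
  obtain ⟨-, hpos, hε⟩ := h
  refine ⟨fun t ht => hpos t ht, fun ε he => ?_⟩
  obtain ⟨⟨g, hg, C, hC, hgC⟩, ⟨k, hk, D, hD, hkD⟩⟩ := hε ε he
  refine ⟨max (C * C) (D * D), by positivity, fun s t hs ht => ?_⟩
  have hbt := hpos t ht
  rcases le_total s t with hst | hst
  · have h1 := (hgC s hs).2
    have h2 := hg (mem_Ioi.2 hs) (mem_Ioi.2 ht) hst
    have h3 := (hgC t ht).1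
    have h4 : s ^ ε * b s ≤ C * C * (t ^ ε * b t) := by
      have : g t ≤ C * (t ^ ε * b t) := by
        rw [inv_mul_le_iff₀ hC] at h3; exact h3
      calc s ^ ε * b s ≤ C * g s := h1
        _ ≤ C * (C * (t ^ ε * b t)) := by gcongr; exact h2.trans this
        _ = _ := by ring
    have hse : 0 < s ^ ε := by positivity
    have : b s ≤ C * C * (t / s) ^ ε * b t := by
      rw [Real.div_rpow ht.le hs.le]
      rw [← mul_le_mul_iff_right₀ hse]
      calc _ ≤ _ := h4
        _ = _ := by field_simp
    refine this.trans ?_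
    gcongr
    · exact le_max_left _ _
    · exact le_max_right _ _
  · have h1 := (hkD s hs).2
    have h2 := hk (mem_Ioi.2 ht) (mem_Ioi.2 hs) hst
    have h3 := (hkD t ht).1
    have h4 : s ^ (-ε) * b s ≤ D * D * (t ^ (-ε) * b t) := by
      have : k t ≤ D * (t ^ (-ε) * b t) := by
        rw [inv_mul_le_iff₀ hD] at h3; exact h3
      calc s ^ (-ε) * b s ≤ D * k s := h1
        _ ≤ D * (D * (t ^ (-ε) * b t)) := by gcongr; exact h2.trans this
        _ = _ := by ring
    have hse : 0 < s ^ (-ε) := by positivity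
    have : b s ≤ D * D * (s / t) ^ ε * b t := by
      rw [Real.div_rpow hs.le ht.le]
      rw [← mul_le_mul_iff_right₀ hse]
      refine h4.trans (le_of_eq ?_)
      rw [Real.rpow_neg hs.le, Real.rpow_neg ht.le]
      have : 0 < s ^ ε := by positivity
      field_simp
    refine this.trans ?_
    gcongr
    · exact le_max_right _ _
    · exact le_max_left _ _

lemma Pot.div {b c : ℝ → ℝ} (hb : Pot b) (hc : Pot c) : Pot (fun t => b t / c t) := by
  refine ⟨fun t ht => div_pos (hb.1 t ht) (hc.1 t ht), fun ε he => ?_⟩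
  obtain ⟨C, hC, h1⟩ := hb.2 (ε / 2) (by positivity)
  obtain ⟨D, hD, h2⟩ := hc.2 (ε / 2) (by positivity)
  refine ⟨C * D, by positivity, fun s t hs ht => ?_⟩
  have hm := max_ratio_pos hs ht
  have h1 := h1 s t hs ht
  have h2 := h2 t s ht hs
  rw [max_comm] at h2
  have hbs := hb.1 s hs
  have hbt := hb.1 t ht
  have hcs := hc.1 s hs
  have hct := hc.1 t ht
  have e : max (s / t) (t / s) ^ ε = max (s / t) (t / s) ^ (ε/2) * max (s / t) (t / s) ^ (ε/2) := by
    rw [← Real.rpow_add hm]; congr 1; ring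
  rw [e]
  set M := max (s / t) (t / s) ^ (ε/2)
  have hM : 0 < M := by positivity
  rw [div_le_iff₀ hcs]
  calc b s ≤ C * M * b t := h1
    _ = C * M * b t / c t * c t := by field_simp
    _ ≤ C * M * b t / c t * (D * M * c s) := by gcongr
    _ = _ := by ring

lemma Pot.loc {b : ℝ → ℝ} (hb : Pot b) : ∃ C : ℝ, 0 < C ∧ ∀ j : ℤ, ∀ t ∈ dI j,
    b t ≤ C * b (2 ^ j) ∧ b (2 ^ j) ≤ C * b t := by
  obtain ⟨C, hC, h⟩ := hb.2 1 one_pos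
  refine ⟨C * 2, by positivity, fun j t ht => ?_⟩
  have htp := dI_pos ht
  have hjp := two_zpow_pos j
  have h2 : t < 2 ^ j * 2 := by have := ht.2; rwa [zpow_add_one₀ (by norm_num)] at this
  have h1 := ht.1
  have hm : max (t / 2 ^ j) (2 ^ j / t) ≤ 2 := by
    refine max_le ?_ ?_
    · rw [div_le_iff₀ hjp]; linarith
    · rw [div_le_iff₀ htp]; linarith
  have hbt := hb.1 t htp
  have hbj := hb.1 _ hjp
  have ha := h t (2 ^ j) htp hjp
  have hb' := h (2 ^ j) t hjp htp
  rw [Real.rpow_one] at ha hb'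
  rw [max_comm] at hb'
  constructor
  · refine ha.trans ?_; gcongr
  · refine hb'.trans ?_; gcongr

/-- discrete Potter bounds -/
def DPot (d : ℤ → ℝ) : Prop :=
  (∀ j, 0 < d j) ∧ ∀ ε : ℝ, 0 < ε → ∃ C : ℝ, 0 < C ∧ ∀ i j : ℤ,
    d i ≤ C * 2 ^ (ε * |((i - j : ℤ) : ℝ)|) * d j

lemma max_two_zpow (i j : ℤ) :
    max ((2 : ℝ) ^ i / 2 ^ j) (2 ^ j / 2 ^ i) = 2 ^ (|((i - j : ℤ) : ℝ)|) := by
  rw [← zpow_sub₀ (by norm_num), ← zpow_sub₀ (by norm_num), ← Int.cast_abs, Real.rpow_intCast]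
  rcases le_total i j with h | h
  · rw [max_eq_right (zpow_le_zpow_right₀ (by norm_num) (by omega)), abs_of_nonpos (by omega)]
    congr 1; ring
  · rw [max_eq_left (zpow_le_zpow_right₀ (by norm_num) (by omega)), abs_of_nonneg (by omega)]

lemma Pot.dpot {b : ℝ → ℝ} (hb : Pot b) : DPot (fun j => b (2 ^ j)) := by
  refine ⟨fun j => hb.1 _ (two_zpow_pos j), fun ε he => ?_⟩
  obtain ⟨C, hC, h⟩ := hb.2 ε he
  refine ⟨C, hC, fun i j => ?_⟩
  have := h _ _ (two_zpow_pos i) (two_zpow_pos j)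
  rw [max_two_zpow, ← Real.rpow_mul (by norm_num), mul_comm _ ε] at this
  exact this

lemma DPot.mul {d e : ℤ → ℝ} (hd : DPot d) (he : DPot e) : DPot (fun j => d j * e j) := by
  refine ⟨fun j => mul_pos (hd.1 j) (he.1 j), fun ε h0 => ?_⟩
  obtain ⟨C, hC, h1⟩ := hd.2 (ε / 2) (by positivity)
  obtain ⟨D, hD, h2⟩ := he.2 (ε / 2) (by positivity)
  refine ⟨C * D, by positivity, fun i j => ?_⟩
  have e1 : (2 : ℝ) ^ (ε * |((i - j : ℤ) : ℝ)|)
    = 2 ^ (ε / 2 * |((i - j : ℤ) : ℝ)|) * 2 ^ (ε / 2 * |((i - j : ℤ) : ℝ)|) := by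
    rw [← Real.rpow_add (by norm_num)]; congr 1; ring
  rw [e1]
  have hei := he.1 i
  have hdj := hd.1 j
  calc d i * e i ≤ (C * 2 ^ (ε / 2 * |((i - j : ℤ) : ℝ)|) * d j) *
        (D * 2 ^ (ε / 2 * |((i - j : ℤ) : ℝ)|) * e j) :=
      mul_le_mul (h1 i j) (h2 i j) hei.le (by positivity)
    _ = _ := by ring

lemma DPot.inv {d : ℤ → ℝ} (hd : DPot d) : DPot (fun j => (d j)⁻¹) := by
  refine ⟨fun j => inv_pos.2 (hd.1 j), fun ε h0 => ?_⟩
  obtain ⟨C, hC, h1⟩ := hd.2 ε h0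
  refine ⟨C, hC, fun i j => ?_⟩
  have hi := hd.1 i
  have hj := hd.1 j
  have h := h1 j i
  have e1 : |((i - j : ℤ) : ℝ)| = |((j - i : ℤ) : ℝ)| := by
    push_cast; rw [abs_sub_comm]
  rw [e1]
  set M := (2 : ℝ) ^ (ε * |((j - i : ℤ) : ℝ)|)
  rw [inv_le_iff_one_le_mul₀ hi]
  calc 1 = (d j)⁻¹ * d j := by field_simp
    _ ≤ (d j)⁻¹ * (C * M * d i) := by gcongr
    _ = _ := by ring

lemma rpow_loc (s : ℝ) {j : ℤ} {t : ℝ} (ht : t ∈ dI j) :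
    t ^ s ≤ 2 ^ |s| * ((2 : ℝ) ^ j) ^ s ∧ ((2 : ℝ) ^ j) ^ s ≤ 2 ^ |s| * t ^ s := by
  have htp := dI_pos ht
  have hjp := two_zpow_pos j
  have h2 : t ≤ 2 * 2 ^ j := by
    have := ht.2; rw [zpow_add_one₀ (by norm_num)] at this; linarith
  have h1 := ht.1
  have hone : (1 : ℝ) ≤ 2 ^ |s| := Real.one_le_rpow (by norm_num) (abs_nonneg s)
  rcases le_total 0 s with hs | hs
  · rw [abs_of_nonneg hs] at hone ⊢
    constructor
    · rw [← Real.mul_rpow (by norm_num) hjp.le]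
      exact Real.rpow_le_rpow htp.le h2 hs
    · calc ((2 : ℝ) ^ j) ^ s ≤ t ^ s := Real.rpow_le_rpow hjp.le h1 hs
        _ ≤ _ := le_mul_of_one_le_left (by positivity) hone
  · rw [abs_of_nonpos hs] at hone ⊢
    constructor
    · calc t ^ s ≤ ((2 : ℝ) ^ j) ^ s := Real.rpow_le_rpow_of_nonpos hjp h1 hs
        _ ≤ _ := le_mul_of_one_le_left (by positivity) hone
    · have : (2 * (2 : ℝ) ^ j) ^ s ≤ t ^ s := Real.rpow_le_rpow_of_nonpos htp h2 hs
      rw [Real.mul_rpow (by norm_num) hjp.le] at this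
      rw [Real.rpow_neg (by norm_num)]
      have h3 : (0 : ℝ) < 2 ^ s := by positivity
      rw [inv_mul_eq_div, le_div_iff₀ h3]
      linarith

/-- `h` is comparable to `t^(-1/q) * x j` on the dyadic interval `dI j`. -/
def Loc (q : ℝ≥0∞) (h : ℝ → ℝ≥0∞) (x : ℤ → ℝ≥0∞) (C : ℝ≥0∞) : Prop :=
  ∀ j, ∀ t ∈ dI j, h t ≤ C * (ENNReal.ofReal (t ^ (-(q⁻¹.toReal))) * x j) ∧
    ENNReal.ofReal (t ^ (-(q⁻¹.toReal))) * x j ≤ C * h t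

lemma loc_mk (q : ℝ≥0∞) {w : ℝ → ℝ} {F : ℝ → ℝ≥0∞} {u : ℤ → ℝ} {Y : ℤ → ℝ≥0∞} {C : ℝ} {D : ℝ≥0∞}
    (hC : 0 ≤ C)
    (hw : ∀ j, ∀ t ∈ dI j, w t ≤ C * u j ∧ u j ≤ C * w t)
    (hF : ∀ j, ∀ t ∈ dI j, F t ≤ D * Y j ∧ Y j ≤ D * F t) :
    Loc q (fun t => ENNReal.ofReal (t ^ (-(q⁻¹.toReal)) * w t) * F t)
      (fun j => ENNReal.ofReal (u j) * Y j) (ENNReal.ofReal C * D) := by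
  intro j t ht
  have htp := dI_pos ht
  have hp : 0 ≤ t ^ (-(q⁻¹.toReal)) := by positivity
  obtain ⟨w1, w2⟩ := hw j t ht
  obtain ⟨F1, F2⟩ := hF j t ht
  beta_reduce
  rw [ENNReal.ofReal_mul hp]
  constructor
  · calc _ ≤ ENNReal.ofReal (t ^ (-(q⁻¹.toReal))) * ENNReal.ofReal (C * u j) * (D * Y j) := by
          gcongr
      _ = _ := by rw [ENNReal.ofReal_mul hC]; ring
  · calc _ ≤ ENNReal.ofReal (t ^ (-(q⁻¹.toReal))) * (ENNReal.ofReal (C * w t) * (D * F t)) := by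
          gcongr
      _ = _ := by rw [ENNReal.ofReal_mul hC]; ring

lemma two_rpow_ne_top (q : ℝ≥0∞) : (2 : ℝ≥0∞) ^ (q⁻¹.toReal) ≠ ∞ :=
  ENNReal.rpow_ne_top_of_nonneg ENNReal.toReal_nonneg (by simp)

lemma Loc.full {q : ℝ≥0∞} (h0 : 0 < q) {h : ℝ → ℝ≥0∞} {x : ℤ → ℝ≥0∞} {C : ℝ≥0∞} (hC : C ≠ ∞)
    (H : Loc q h x C) : LqNorm q (Ioi 0) h ≤ C * ell q x ∧
      ell q x ≤ 2 ^ (q⁻¹.toReal) * C * LqNorm q (Ioi 0) h :=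
  ⟨disc_upper h0 measurableSet_Ioi subset_rfl fun j t ht _ => (H j t ht).1,
    disc_lower h0 hC fun j _ => ⟨fun _ ht => dI_pos ht, fun t ht => (H j t ht).2⟩⟩

/-- restriction to `k ≥ j` -/
def cutGE (j : ℤ) (x : ℤ → ℝ≥0∞) : ℤ → ℝ≥0∞ := fun k => if j ≤ k then x k else 0

/-- restriction to `k ≤ j` -/
def cutLE (j : ℤ) (x : ℤ → ℝ≥0∞) : ℤ → ℝ≥0∞ := fun k => if k ≤ j then x k else 0

lemma cutGE_le (j : ℤ) (x : ℤ → ℝ≥0∞) (k : ℤ) : cutGE j x k ≤ x k := by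
  unfold cutGE; split_ifs <;> simp

lemma cutLE_le (j : ℤ) (x : ℤ → ℝ≥0∞) (k : ℤ) : cutLE j x k ≤ x k := by
  unfold cutLE; split_ifs <;> simp

lemma Loc.tail {q : ℝ≥0∞} (h0 : 0 < q) {h : ℝ → ℝ≥0∞} {x : ℤ → ℝ≥0∞} {C D : ℝ≥0∞} (hC : C ≠ ∞)
    (H : Loc q h x C) (hx : ∀ k, x k ≤ D * x (k + 1)) (j : ℤ) (t : ℝ) (ht : t ∈ dI j) :
    LqNorm q (Ioi t) h ≤ C * ell q (cutGE j x) ∧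
      ell q (cutGE j x) ≤ D * (2 ^ (q⁻¹.toReal) * C) * LqNorm q (Ioi t) h := by
  have htp := dI_pos ht
  constructor
  · refine disc_upper h0 measurableSet_Ioi (fun s hs => htp.trans hs) fun i s hs hst => ?_
    have : j ≤ i := dI_le_of_lt ht hs hst
    simp only [cutGE, if_pos this]
    exact (H i s hs).1
  · have h1 : ell q (cutGE j x) ≤ D * ell q (cutGE (j + 1) x) := by
      rw [← ell_shift q 1 (cutGE (j + 1) x), ← ell_const_mul h0]
      refine ell_mono fun k => ?_
      unfold cutGE
      by_cases hk : j ≤ k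
      · rw [if_pos hk, if_pos (by omega)]; exact hx k
      · rw [if_neg hk]; exact zero_le
    refine h1.trans ?_
    rw [mul_assoc]
    refine mul_le_mul_right ?_ D
    refine disc_lower h0 hC fun i hi => ?_
    have hij : j + 1 ≤ i := by
      by_contra hc
      exact hi (by simp [cutGE, hc])
    refine ⟨fun s hs => ?_, fun s hs => ?_⟩
    · have : (2 : ℝ) ^ (j + 1) ≤ 2 ^ i := zpow_le_zpow_right₀ (by norm_num) hij
      exact mem_Ioi.2 (ht.2.trans_le (this.trans hs.1))
    · simp only [cutGE, if_pos hij]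
      exact (H i s hs).2

lemma Loc.head {q : ℝ≥0∞} (h0 : 0 < q) {h : ℝ → ℝ≥0∞} {x : ℤ → ℝ≥0∞} {C D : ℝ≥0∞} (hC : C ≠ ∞)
    (H : Loc q h x C) (hx : ∀ k, x (k + 1) ≤ D * x k) (j : ℤ) (t : ℝ) (ht : t ∈ dI j) :
    LqNorm q (Ioo 0 t) h ≤ C * ell q (cutLE j x) ∧
      ell q (cutLE j x) ≤ D * (2 ^ (q⁻¹.toReal) * C) * LqNorm q (Ioo 0 t) h := by
  have htp := dI_pos ht
  constructor
  · refine disc_upper h0 measurableSet_Ioo (fun s hs => hs.1) fun i s hs hst => ?_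
    have : i ≤ j := dI_le_of_lt hs ht hst.2
    simp only [cutLE, if_pos this]
    exact (H i s hs).1
  · have h1 : ell q (cutLE j x) ≤ D * ell q (cutLE (j - 1) x) := by
      rw [← ell_shift q 1 (cutLE j x), ← ell_const_mul h0]
      refine ell_mono fun k => ?_
      unfold cutLE
      by_cases hk : k + 1 ≤ j
      · rw [if_pos hk, if_pos (by omega)]; exact hx k
      · rw [if_neg hk]; exact zero_le
    refine h1.trans ?_
    rw [mul_assoc]
    refine mul_le_mul_right ?_ D
    refine disc_lower h0 hC fun i hi => ?_
    have hij : i ≤ j - 1 := by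
      by_contra hc
      exact hi (by simp only [cutLE, if_neg hc])
    refine ⟨fun s hs => ?_, fun s hs => ?_⟩
    · have : (2 : ℝ) ^ (i + 1) ≤ 2 ^ j := zpow_le_zpow_right₀ (by norm_num) (by omega)
      exact ⟨dI_pos hs, hs.2.trans_le (this.trans ht.1)⟩
    · simp only [cutLE, if_pos hij]
      exact (H i s hs).2

lemma Kf_loc (N₀ N₁ : E → ℝ≥0∞) (f : E) (j : ℤ) (t : ℝ) (ht : t ∈ dI j) :
    Kf N₀ N₁ t f ≤ 2 * Kf N₀ N₁ (2 ^ j) f ∧ Kf N₀ N₁ (2 ^ j) f ≤ 2 * Kf N₀ N₁ t f := by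
  have hjp := two_zpow_pos j
  constructor
  · refine (Kf_scale N₀ N₁ hjp ht.1 f).trans ?_
    gcongr
    have : t / 2 ^ j ≤ 2 := by
      have := ht.2; rw [zpow_add_one₀ (by norm_num)] at this
      rw [div_le_iff₀ hjp]; linarith
    exact (ENNReal.ofReal_le_ofReal this).trans (by simp)
  · refine (Kf_mono N₀ N₁ ht.1 f).trans ?_
    exact le_mul_of_one_le_left zero_le (by norm_num)

lemma loc_K (N₀ N₁ : E → ℝ≥0∞) (q : ℝ≥0∞) (θ : ℝ) {b : ℝ → ℝ} {v : ℤ → ℝ} {C : ℝ} (hC : 0 < C)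
    (hb : ∀ j, ∀ t ∈ dI j, b t ≤ C * v j ∧ v j ≤ C * b t) (hv : ∀ j, 0 ≤ v j)
    (hbp : ∀ t, 0 < t → 0 ≤ b t) (f : E) :
    Loc q (fun u => ENNReal.ofReal (u ^ (-θ - q⁻¹.toReal) * b u) * Kf N₀ N₁ u f)
      (fun j => ENNReal.ofReal (((2 : ℝ) ^ j) ^ (-θ) * v j) * Kf N₀ N₁ (2 ^ j) f)
      (ENNReal.ofReal (2 ^ |(-θ)| * C) * 2) := by
  have := loc_mk q (w := fun u => u ^ (-θ) * b u) (F := fun u => Kf N₀ N₁ u f)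
    (u := fun j => ((2 : ℝ) ^ j) ^ (-θ) * v j) (Y := fun j => Kf N₀ N₁ (2 ^ j) f)
    (C := 2 ^ |(-θ)| * C) (D := 2) (by positivity) ?_ (Kf_loc N₀ N₁ f)
  · intro j t ht
    have h1 := this j t ht
    have htp := dI_pos ht
    have e : t ^ (-θ - q⁻¹.toReal) * b t = t ^ (-(q⁻¹.toReal)) * (t ^ (-θ) * b t) := by
      rw [sub_eq_add_neg, Real.rpow_add htp]; ring
    simp only [e]
    exact h1
  · intro j t ht
    have htp := dI_pos ht
    obtain ⟨r1, r2⟩ := rpow_loc (-θ) ht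
    obtain ⟨b1, b2⟩ := hb j t ht
    have := hbp t htp
    have := hv j
    constructor
    · calc t ^ (-θ) * b t ≤ (2 ^ |(-θ)| * ((2 : ℝ) ^ j) ^ (-θ)) * (C * v j) := by gcongr
        _ = _ := by ring
    · calc ((2 : ℝ) ^ j) ^ (-θ) * v j ≤ (2 ^ |(-θ)| * t ^ (-θ)) * (C * b t) := by gcongr
        _ = _ := by ring

lemma normK_disc {q : ℝ≥0∞} (h0 : 0 < q) (θ : ℝ) {b : ℝ → ℝ} {v : ℤ → ℝ} {C : ℝ} (hC : 0 < C)
    (hb : ∀ j, ∀ t ∈ dI j, b t ≤ C * v j ∧ v j ≤ C * b t) (hv : ∀ j, 0 ≤ v j)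
    (hbp : ∀ t, 0 < t → 0 ≤ b t) : ∃ M : ℝ≥0∞, M ≠ ∞ ∧ ∀ (N₀ N₁ : E → ℝ≥0∞) (f : E),
      normK N₀ N₁ θ q b f ≤ M * ell q (fun j =>
        ENNReal.ofReal (((2 : ℝ) ^ j) ^ (-θ) * v j) * Kf N₀ N₁ (2 ^ j) f) ∧
      ell q (fun j => ENNReal.ofReal (((2 : ℝ) ^ j) ^ (-θ) * v j) * Kf N₀ N₁ (2 ^ j) f)
        ≤ M * normK N₀ N₁ θ q b f := by
  have hD : ENNReal.ofReal (2 ^ |(-θ)| * C) * 2 ≠ ∞ :=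
    ENNReal.mul_ne_top ENNReal.ofReal_ne_top (by simp)
  set D := ENNReal.ofReal (2 ^ |(-θ)| * C) * 2
  refine ⟨max D (2 ^ (q⁻¹.toReal) * D), ?_, fun N₀ N₁ f => ?_⟩
  · rw [Ne, max_eq_top, not_or]
    exact ⟨hD, ENNReal.mul_ne_top (two_rpow_ne_top q) hD⟩
  · obtain ⟨h1, h2⟩ := (loc_K N₀ N₁ q θ hC hb hv hbp f).full h0 hD
    exact ⟨h1.trans (mul_le_mul_left (le_max_left _ _) _),
      h2.trans (mul_le_mul_left (le_max_right _ _) _)⟩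

lemma normR_disc {r q : ℝ≥0∞} (hr : 0 < r) (hq : 0 < q) (σ : ℝ) {b a : ℝ → ℝ}
    (hb : Pot b) (ha : Pot a) : ∃ M : ℝ≥0∞, M ≠ ∞ ∧ ∀ (N₀ N₁ : E → ℝ≥0∞) (f : E),
      normR N₀ N₁ σ r q b a f ≤ M * ell r (fun j => ENNReal.ofReal (b (2 ^ j) / a (2 ^ j)) *
        ell q (cutGE j fun k => ENNReal.ofReal (((2 : ℝ) ^ k) ^ (-σ) * a (2 ^ k)) *
          Kf N₀ N₁ (2 ^ k) f)) ∧
      ell r (fun j => ENNReal.ofReal (b (2 ^ j) / a (2 ^ j)) *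
        ell q (cutGE j fun k => ENNReal.ofReal (((2 : ℝ) ^ k) ^ (-σ) * a (2 ^ k)) *
          Kf N₀ N₁ (2 ^ k) f)) ≤ M * normR N₀ N₁ σ r q b a f := by
  obtain ⟨C, hC, hal⟩ := ha.loc
  obtain ⟨C', hC', hbal⟩ := (hb.div ha).loc
  have hM1 : ENNReal.ofReal (2 ^ |(-σ)| * C) * 2 ≠ ∞ :=
    ENNReal.mul_ne_top ENNReal.ofReal_ne_top (by simp)
  set M1 := ENNReal.ofReal (2 ^ |(-σ)| * C) * 2
  obtain ⟨A, hA, hAd⟩ := ha.dpot.2 1 one_pos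
  set D : ℝ≥0∞ := ENNReal.ofReal (2 ^ σ * (A * 2))
  have hstep : ∀ (N₀ N₁ : E → ℝ≥0∞) (f : E) (k : ℤ),
      ENNReal.ofReal (((2 : ℝ) ^ k) ^ (-σ) * a (2 ^ k)) * Kf N₀ N₁ (2 ^ k) f ≤
      D * (ENNReal.ofReal (((2 : ℝ) ^ (k+1)) ^ (-σ) * a (2 ^ (k+1))) * Kf N₀ N₁ (2 ^ (k+1)) f) := by
    intro N₀ N₁ f k
    rw [← mul_assoc, ← ENNReal.ofReal_mul (by positivity)]
    refine mul_le_mul' (ENNReal.ofReal_le_ofReal ?_) ?_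
    · have h1 := hAd k (k + 1)
      have e1 : (2 : ℝ) ^ (1 * |((k - (k + 1) : ℤ) : ℝ)|) = 2 := by simp
      rw [e1] at h1
      beta_reduce at h1
      have hp := two_zpow_pos k
      rw [zpow_add_one₀ (by norm_num)] at h1 ⊢
      rw [Real.mul_rpow hp.le (by norm_num), Real.rpow_neg (by norm_num : (0:ℝ) ≤ 2)]
      have h2 : (0:ℝ) < 2 ^ σ := by positivity
      calc ((2 : ℝ) ^ k) ^ (-σ) * a (2 ^ k)
          ≤ ((2 : ℝ) ^ k) ^ (-σ) * (A * 2 * a (2 ^ k * 2)) := by gcongr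
        _ = _ := by field_simp
    · exact Kf_mono N₀ N₁ (zpow_le_zpow_right₀ (by norm_num) (by omega)) f
  set M2 : ℝ≥0∞ := max M1 (D * (2 ^ (q⁻¹.toReal) * M1))
  have hM2 : M2 ≠ ∞ := by
    rw [Ne, max_eq_top, not_or]
    exact ⟨hM1, ENNReal.mul_ne_top ENNReal.ofReal_ne_top
      (ENNReal.mul_ne_top (two_rpow_ne_top q) hM1)⟩
  have hM3 : ENNReal.ofReal C' * M2 ≠ ∞ := ENNReal.mul_ne_top ENNReal.ofReal_ne_top hM2
  set M3 := ENNReal.ofReal C' * M2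
  refine ⟨max M3 (2 ^ (r⁻¹.toReal) * M3), ?_, fun N₀ N₁ f => ?_⟩
  · rw [Ne, max_eq_top, not_or]
    exact ⟨hM3, ENNReal.mul_ne_top (two_rpow_ne_top r) hM3⟩
  · have hloc := loc_K N₀ N₁ q σ hC hal (fun j => (ha.1 _ (two_zpow_pos j)).le)
      (fun t ht => (ha.1 t ht).le) f
    have hout := loc_mk r (w := fun t => b t / a t)
      (F := fun t => LqNorm q (Ioi t) fun u =>
        ENNReal.ofReal (u ^ (-σ - q⁻¹.toReal) * a u) * Kf N₀ N₁ u f)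
      (u := fun j => b (2 ^ j) / a (2 ^ j))
      (Y := fun j => ell q (cutGE j fun k => ENNReal.ofReal (((2 : ℝ) ^ k) ^ (-σ) * a (2 ^ k)) *
          Kf N₀ N₁ (2 ^ k) f)) (C := C') (D := M2) hC'.le hbal (by
        intro j t ht
        obtain ⟨h1, h2⟩ := hloc.tail hq hM1 (hstep N₀ N₁ f) j t ht
        exact ⟨h1.trans (mul_le_mul_left (le_max_left _ _) _),
          h2.trans (mul_le_mul_left (le_max_right _ _) _)⟩)
    obtain ⟨h1, h2⟩ := hout.full hr hM3
    exact ⟨h1.trans (mul_le_mul_left (le_max_left _ _) _),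
      h2.trans (mul_le_mul_left (le_max_right _ _) _)⟩

lemma ell_cut_shift {r : ℝ≥0∞} (h0 : 0 < r) {x : ℤ → ℝ} {A ε : ℝ} (hA : 0 < A)
    (hx : ∀ i j, x i ≤ A * 2 ^ (ε * |((i - j : ℤ) : ℝ)|) * x j) (i j : ℤ) :
    ell r (cutLE i (fun k => ENNReal.ofReal (x k))) ≤
      ENNReal.ofReal (A * 2 ^ (ε * |((i - j : ℤ) : ℝ)|)) *
        ell r (cutLE j (fun k => ENNReal.ofReal (x k))) := by
  rw [← ell_shift r (i - j) (cutLE i _), ← ell_const_mul h0]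
  refine ell_mono fun k => ?_
  unfold cutLE
  by_cases hk : k ≤ j
  · rw [if_pos hk, if_pos (by omega), ← ENNReal.ofReal_mul (by positivity)]
    refine ENNReal.ofReal_le_ofReal ?_
    have := hx (k + (i - j)) k
    have e : k + (i - j) - k = i - j := by ring
    rwa [e] at this
  · rw [if_neg (by omega)]; exact zero_le

lemma partial_sum {r : ℝ≥0∞} (h0 : 0 < r) {β : ℝ → ℝ} (hβ : Pot β)
    (hfin : LqNorm r (Ioo 0 1) (svWgt r β) ≠ ∞) :
    ∃ d : ℤ → ℝ, DPot d ∧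
      (∀ j, ENNReal.ofReal (d j) = ell r (cutLE j (fun k => ENNReal.ofReal (β (2 ^ k))))) ∧
      ∃ C : ℝ, 0 < C ∧ ∀ j, ∀ t ∈ dI j, (LqNorm r (Ioo 0 t) (svWgt r β)).toReal ≤ C * d j ∧
        d j ≤ C * (LqNorm r (Ioo 0 t) (svWgt r β)).toReal := by
  obtain ⟨C, hC, hl⟩ := hβ.loc
  have hloc := loc_mk r (w := β) (F := fun _ => 1) (u := fun j => β (2 ^ j)) (Y := fun _ => 1)
    (C := C) (D := 1) hC.le hl (by simp)
  simp only [mul_one] at hloc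
  change Loc r (svWgt r β) _ _ at hloc
  obtain ⟨A, hA, hAd⟩ := hβ.dpot.2 1 one_pos
  have hstep : ∀ k : ℤ, ENNReal.ofReal (β (2 ^ (k + 1))) ≤
      ENNReal.ofReal (A * 2) * ENNReal.ofReal (β (2 ^ k)) := by
    intro k
    rw [← ENNReal.ofReal_mul (by positivity)]
    refine ENNReal.ofReal_le_ofReal ?_
    have := hAd (k + 1) k
    simpa using this
  have hhead := hloc.head h0 ENNReal.ofReal_ne_top hstep
  set x : ℤ → ℝ≥0∞ := fun k => ENNReal.ofReal (β (2 ^ k)) with hx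
  set M : ℝ≥0∞ := ENNReal.ofReal (A * 2) * (2 ^ (r⁻¹.toReal) * ENNReal.ofReal C) with hM
  have hMt : M ≠ ∞ := ENNReal.mul_ne_top ENNReal.ofReal_ne_top
      (ENNReal.mul_ne_top (two_rpow_ne_top r) ENNReal.ofReal_ne_top)
  have hf0 : ell r (cutLE 0 x) ≠ ∞ := by
    refine ne_top_of_le_ne_top (ENNReal.mul_ne_top hMt hfin) (hhead 0 1 ?_).2
    simp [dI]
  have hf : ∀ j, ell r (cutLE j x) ≠ ∞ := fun j =>
    ne_top_of_le_ne_top (ENNReal.mul_ne_top ENNReal.ofReal_ne_top hf0)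
      (ell_cut_shift h0 hA hAd j 0)
  have hpos : ∀ j, 0 < (ell r (cutLE j x)).toReal := by
    intro j
    refine ENNReal.toReal_pos ?_ (hf j)
    have h1 := le_ell h0 (cutLE j x) j
    have h2 : 0 < cutLE j x j := by
      simp only [cutLE, le_refl, if_true, hx, ENNReal.ofReal_pos]
      exact hβ.1 _ (two_zpow_pos j)
    exact (h2.trans_le h1).ne'
  refine ⟨fun j => (ell r (cutLE j x)).toReal, ⟨hpos, ?_⟩, fun j => ENNReal.ofReal_toReal (hf j), ?_⟩
  · intro ε hε
    obtain ⟨B, hB, hBd⟩ := hβ.dpot.2 ε hε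
    refine ⟨B, hB, fun i j => ?_⟩
    have h1 := ell_cut_shift h0 hB hBd i j
    have h2 := ENNReal.toReal_mono (ENNReal.mul_ne_top ENNReal.ofReal_ne_top (hf j)) h1
    rwa [ENNReal.toReal_mul, ENNReal.toReal_ofReal (by positivity)] at h2
  · refine ⟨max C M.toReal, lt_max_of_lt_left hC, fun j t ht => ?_⟩
    obtain ⟨h1, h2⟩ := hhead j t ht
    have hLf : LqNorm r (Ioo 0 t) (svWgt r β) ≠ ∞ :=
      ne_top_of_le_ne_top (ENNReal.mul_ne_top ENNReal.ofReal_ne_top (hf j)) h1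
    constructor
    · have := ENNReal.toReal_mono (ENNReal.mul_ne_top ENNReal.ofReal_ne_top (hf j)) h1
      rw [ENNReal.toReal_mul, ENNReal.toReal_ofReal hC.le] at this
      exact this.trans (mul_le_mul_of_nonneg_right (le_max_left _ _) ENNReal.toReal_nonneg)
    · have := ENNReal.toReal_mono (ENNReal.mul_ne_top hMt hLf) h2
      rw [ENNReal.toReal_mul] at this
      exact this.trans (mul_le_mul_of_nonneg_right (le_max_right _ _) ENNReal.toReal_nonneg)

/-- regular growth of the sequence `ρ_j`. -/
structure Grow (rho : ℤ → ℝ) (δ C : ℝ) : Prop where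
  hδ : 0 < δ
  hC : 1 ≤ C
  pos : ∀ j, 0 < rho j
  up : ∀ i j, i ≤ j → rho i * 2 ^ (δ * ((j - i : ℤ) : ℝ)) ≤ C * rho j
  step : ∀ j, rho (j + 1) ≤ C * rho j

lemma Grow.bound {rho : ℤ → ℝ} {δ C : ℝ} (H : Grow rho δ C) {L : ℝ} (hL : 0 < L) :
    ∃ N : ℕ, ∀ i j, rho i ≤ L * rho j → i ≤ j + N := by
  have hδ := H.hδ
  have hC : 0 < C := one_pos.trans_le H.hC
  obtain ⟨N, hN⟩ := exists_nat_ge (Real.logb 2 (C * L) / δ)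
  refine ⟨N, fun i j hij => ?_⟩
  by_contra hc
  push Not at hc
  have h1 := H.up j i (by omega)
  have h2 : rho j * 2 ^ (δ * ((i - j : ℤ) : ℝ)) ≤ rho j * (C * L) := by
    calc _ ≤ _ := h1
      _ ≤ C * (L * rho j) := by gcongr
      _ = _ := by ring
  have h3 := le_of_mul_le_mul_left h2 (H.pos j)
  have h4 : δ * ((i - j : ℤ) : ℝ) ≤ Real.logb 2 (C * L) := by
    rw [Real.le_logb_iff_rpow_le (by norm_num) (by positivity)]; exact h3
  rw [div_le_iff₀ hδ] at hN
  have h5 : (N : ℝ) < ((i - j : ℤ) : ℝ) := by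
    have : (N : ℤ) < i - j := by omega
    exact_mod_cast this
  nlinarith

lemma Grow.transfer {rho : ℤ → ℝ} {δ C : ℝ} (H : Grow rho δ C) {r : ℝ≥0∞} (h0 : 0 < r)
    (F : ℝ → ℝ≥0∞) (hF : ∀ M, F M ≠ ∞) : ∃ D : ℝ≥0∞, D ≠ ∞ ∧ ∀ Φ : ℝ → ℝ≥0∞,
      (∀ M u v, 1 ≤ M → 0 < u → 0 < v → u ≤ M * v → v ≤ M * u → Φ u ≤ F M * Φ v) →
      ell r (fun j => Φ (rho j)) ≤ D * ell r (fun k => Φ (2 ^ k)) ∧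
      ell r (fun k => Φ (2 ^ k)) ≤ D * ell r (fun j => Φ (rho j)) := by
  have hC : 0 < C := one_pos.trans_le H.hC
  -- first direction
  choose κ hκ using fun j => exists_dI (H.pos j)
  have hκ' : ∀ j, (2:ℝ) ^ κ j ≤ rho j ∧ rho j ≤ 2 * 2 ^ κ j := by
    intro j
    have h := hκ j
    refine ⟨h.1, ?_⟩
    have := h.2
    rw [zpow_add_one₀ (by norm_num)] at this
    linarith
  obtain ⟨N, hN⟩ := H.bound (L := 2) (by norm_num)
  obtain ⟨D₁, hD₁, hf₁⟩ := ell_fiber h0 κ N (fun i j hij => by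
    apply hN
    have := (hκ' i).2
    have h2 := (hκ' j).1
    rw [hij] at this
    linarith)
  -- second direction
  have hex : ∀ k : ℤ, ∃ j, rho j ≤ 2 ^ k ∧ (2:ℝ) ^ k < rho (j + 1) := by
    intro k
    have hk := two_zpow_pos k
    have hr0 := H.pos 0
    obtain ⟨N₁, hN₁⟩ := H.bound (L := 2 ^ k / rho 0) (by positivity)
    obtain ⟨N₂, hN₂⟩ := H.bound (L := rho 0 / 2 ^ k) (by positivity)
    have hb : ∃ b : ℤ, ∀ z : ℤ, rho z ≤ 2 ^ k → z ≤ b := by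
      refine ⟨N₁, fun z hz => ?_⟩
      have := hN₁ z 0 (by rw [div_mul_cancel₀ _ hr0.ne']; exact hz)
      omega
    have hn : ∃ z : ℤ, rho z ≤ 2 ^ k := by
      refine ⟨-N₂ - 1, ?_⟩
      by_contra hc
      push Not at hc
      have := hN₂ 0 (-N₂ - 1) (by
        rw [div_mul_eq_mul_div, le_div_iff₀ hk]
        gcongr)
      omega
    obtain ⟨ub, h1, h2⟩ := Int.exists_greatest_of_bdd hb hn
    refine ⟨ub, h1, ?_⟩
    by_contra hc
    push Not at hc
    have := h2 _ hc
    omega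
  choose ι hι using hex
  have hι' : ∀ k, (2:ℝ) ^ k ≤ C * rho (ι k) := fun k => (hι k).2.le.trans (H.step _)
  obtain ⟨N', hN'⟩ := pow_unbounded_of_one_lt C (by norm_num : (1:ℝ) < 2)
  obtain ⟨D₂, hD₂, hf₂⟩ := ell_fiber h0 ι N' (fun i j hij => by
    have h1 := hι' i
    rw [hij] at h1
    have h2 : (2:ℝ) ^ i ≤ 2 ^ (j + (N':ℤ)) := by
      rw [zpow_add₀ (by norm_num), zpow_natCast]
      calc (2:ℝ) ^ i ≤ C * rho (ι j) := h1
        _ ≤ 2 ^ N' * 2 ^ j := by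
          have := (hι j).1
          have := H.pos (ι j)
          gcongr
        _ = _ := mul_comm _ _
    exact (zpow_le_zpow_iff_right₀ (by norm_num)).1 h2)
  refine ⟨max (F 2 * D₁) (F C * D₂), ?_, fun Φ hΦ => ⟨?_, ?_⟩⟩
  · rw [Ne, max_eq_top, not_or]
    exact ⟨ENNReal.mul_ne_top (hF _) hD₁, ENNReal.mul_ne_top (hF _) hD₂⟩
  · calc ell r (fun j => Φ (rho j)) ≤ ell r (fun j => F 2 * Φ (2 ^ κ j)) := by
          refine ell_mono fun j => hΦ 2 _ _ (by norm_num) (H.pos j) (two_zpow_pos _) (hκ' j).2 ?_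
          have := (hκ' j).1
          have := H.pos j
          linarith
      _ = F 2 * ell r (fun j => Φ (2 ^ κ j)) := ell_const_mul h0 _ _
      _ ≤ F 2 * (D₁ * ell r (fun k => Φ (2 ^ k))) := mul_le_mul_right (hf₁ fun k => Φ (2 ^ k)) _
      _ = F 2 * D₁ * ell r (fun k => Φ (2 ^ k)) := (mul_assoc _ _ _).symm
      _ ≤ _ := mul_le_mul_left (le_max_left _ _) _
  · calc ell r (fun k => Φ (2 ^ k)) ≤ ell r (fun k => F C * Φ (rho (ι k))) := by
          refine ell_mono fun k => hΦ C _ _ H.hC (two_zpow_pos _) (H.pos _) (hι' k) ?_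
          exact (hι k).1.trans (le_mul_of_one_le_left (two_zpow_pos k).le H.hC)
      _ = F C * ell r (fun k => Φ (rho (ι k))) := ell_const_mul h0 _ _
      _ ≤ F C * (D₂ * ell r (fun j => Φ (rho j))) := mul_le_mul_right (hf₂ fun j => Φ (rho j)) _
      _ = F C * D₂ * ell r (fun j => Φ (rho j)) := (mul_assoc _ _ _).symm
      _ ≤ _ := mul_le_mul_left (le_max_right _ _) _

lemma DPot.grow {e : ℤ → ℝ} (he : DPot e) {s : ℝ} (hs : 0 < s) :
    ∃ C, Grow (fun j => ((2:ℝ) ^ j) ^ s * e j) (s / 2) C := by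
  obtain ⟨A, hA, hAd⟩ := he.2 (s / 2) (by positivity)
  refine ⟨max 1 (max A (2 ^ s * (A * 2 ^ (s / 2)))), by positivity, le_max_left _ _,
    fun j => mul_pos (by positivity) (he.1 j), ?_, ?_⟩
  · intro i j hij
    have hij' : (0:ℝ) ≤ ((j - i : ℤ) : ℝ) := by exact_mod_cast (by omega : (0:ℤ) ≤ j - i)
    have h1 := hAd i j
    have h2 : |((i - j : ℤ) : ℝ)| = ((j - i : ℤ) : ℝ) := by
      rw [← abs_of_nonneg hij', ← abs_neg]; congr 1; push_cast; ring
    rw [h2] at h1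
    set n : ℝ := ((j - i : ℤ) : ℝ) with hn
    have e1 : ((2:ℝ) ^ j) ^ s = ((2:ℝ) ^ i) ^ s * (2 ^ (s / 2 * n) * 2 ^ (s / 2 * n)) := by
      rw [← Real.rpow_add (by norm_num), ← Real.rpow_intCast, ← Real.rpow_intCast,
        ← Real.rpow_mul (by norm_num), ← Real.rpow_mul (by norm_num), ← Real.rpow_add (by norm_num)]
      congr 1; rw [hn]; push_cast; ring
    have hp := he.1 j
    have hi : 0 < ((2:ℝ) ^ i) ^ s := by positivity
    calc ((2:ℝ) ^ i) ^ s * e i * 2 ^ (s / 2 * n)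
        ≤ ((2:ℝ) ^ i) ^ s * (A * 2 ^ (s / 2 * n) * e j) * 2 ^ (s / 2 * n) := by gcongr
      _ = A * (((2:ℝ) ^ j) ^ s * e j) := by rw [e1]; ring
      _ ≤ _ := mul_le_mul_of_nonneg_right ((le_max_left _ _).trans (le_max_right _ _))
          (by positivity)
  · intro j
    have h1 := hAd (j + 1) j
    have e1 : |((j + 1 - j : ℤ) : ℝ)| = 1 := by simp
    rw [e1, mul_one] at h1
    have hp := he.1 j
    have hj := two_zpow_pos j
    calc ((2:ℝ) ^ (j + 1)) ^ s * e (j + 1) ≤ ((2:ℝ) ^ (j + 1)) ^ s * (A * 2 ^ (s / 2) * e j) := by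
          gcongr
      _ = 2 ^ s * (A * 2 ^ (s / 2)) * (((2:ℝ) ^ j) ^ s * e j) := by
          rw [zpow_add_one₀ (by norm_num), Real.mul_rpow hj.le (by norm_num)]; ring
      _ ≤ _ := mul_le_mul_of_nonneg_right ((le_max_right _ _).trans (le_max_right _ _))
          (by positivity)

lemma kernel_real {δ C x n ε ν : ℝ} (hC : 1 ≤ C) (hx : 0 < x) (hn : 0 ≤ n) (hδ : 0 < δ)
    (h : 2 ^ (δ * n) ≤ C * x) (hε : 0 < ε) (hν : 0 < ν) :
    x ^ (-(ε + ν)) * (max x x⁻¹) ^ ε ≤ C ^ (2 * ε + ν) * 2 ^ (-(δ * ν * n)) := by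
  have hC0 : 0 < C := one_pos.trans_le hC
  have h1 : (1:ℝ) ≤ 2 ^ (δ * n) := Real.one_le_rpow (by norm_num) (by positivity)
  have h2 : 1 ≤ C * x := h1.trans h
  have h3 : max x x⁻¹ ≤ C ^ 2 * x := by
    refine max_le ?_ ?_
    · nlinarith [mul_le_mul_of_nonneg_right (one_le_pow₀ hC (n := 2)) hx.le]
    · rw [inv_le_iff_one_le_mul₀ hx]
      nlinarith
  have h4 : (max x x⁻¹) ^ ε ≤ C ^ (2 * ε) * x ^ ε := by
    calc (max x x⁻¹) ^ ε ≤ (C ^ 2 * x) ^ ε := by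
          apply Real.rpow_le_rpow _ h3 hε.le
          exact le_max_of_le_left hx.le
      _ = _ := by
          rw [Real.mul_rpow (by positivity) hx.le, ← Real.rpow_natCast, ← Real.rpow_mul hC0.le]
          norm_num
  have h5 : x ^ (-ν) ≤ C ^ ν * 2 ^ (-(δ * ν * n)) := by
    have h6 : (2:ℝ) ^ (δ * n) / C ≤ x := by rw [div_le_iff₀ hC0]; linarith
    calc x ^ (-ν) ≤ ((2:ℝ) ^ (δ * n) / C) ^ (-ν) :=
          Real.rpow_le_rpow_of_nonpos (by positivity) h6 (by linarith)
      _ = _ := by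
          rw [Real.div_rpow (by positivity) hC0.le, ← Real.rpow_mul (by norm_num),
            Real.rpow_neg hC0.le, div_inv_eq_mul, mul_comm]
          congr 2; ring
  calc x ^ (-(ε + ν)) * (max x x⁻¹) ^ ε ≤ x ^ (-(ε + ν)) * (C ^ (2 * ε) * x ^ ε) := by
        apply mul_le_mul_of_nonneg_left h4 (by positivity)
    _ = C ^ (2 * ε) * x ^ (-ν) := by
        rw [show -ν = -(ε + ν) + ε by ring, Real.rpow_add hx]; ring
    _ ≤ C ^ (2 * ε) * (C ^ ν * 2 ^ (-(δ * ν * n))) := by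
        apply mul_le_mul_of_nonneg_left h5 (by positivity)
    _ = _ := by rw [Real.rpow_add hC0]; ring

lemma kernel_bound {rho : ℤ → ℝ} {δ C : ℝ} (H : Grow rho δ C) {a : ℝ → ℝ} (ha : Pot a) {θ : ℝ}
    (hθ : 0 < θ) (hθ' : θ < 1) : ∃ D δ' : ℝ, 0 < D ∧ 0 < δ' ∧ ∀ j k : ℤ,
      rho j ^ (-θ) * a (rho j) * (if k ≤ j then 1 else rho j / rho k) ≤
        D * 2 ^ (-δ' * |((k - j : ℤ) : ℝ)|) * (rho k ^ (-θ) * a (rho k)) := by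
  have hC := H.hC
  have hC0 : 0 < C := one_pos.trans_le H.hC
  have hδ := H.hδ
  set ε := min θ (1 - θ) / 2 with hε
  have hm : 0 < min θ (1 - θ) := lt_min hθ (by linarith)
  have hε0 : 0 < ε := by positivity
  have hε1 : 2 * ε ≤ θ := by rw [hε]; linarith [min_le_left θ (1 - θ)]
  have hε2 : 2 * ε ≤ 1 - θ := by rw [hε]; linarith [min_le_right θ (1 - θ)]
  obtain ⟨A, hA, hAd⟩ := ha.2 ε hε0
  have hC1 : 0 < C ^ (2 * ε + (θ - ε)) := by positivity
  have hC2 : 0 < C ^ (2 * ε + (1 - θ - ε)) := by positivity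
  refine ⟨A * (C ^ (2 * ε + (θ - ε)) + C ^ (2 * ε + (1 - θ - ε))), δ * ε, by positivity,
    by positivity, fun j k => ?_⟩
  have hj := H.pos j
  have hk := H.pos k
  have haj := ha.1 _ hj
  have hak := ha.1 _ hk
  have hpow : ∀ ν n : ℝ, ε ≤ ν → 0 ≤ n → (2:ℝ) ^ (-(δ * ν * n)) ≤ 2 ^ (-(δ * ε) * n) := by
    intro ν n h1 h2
    apply Real.rpow_le_rpow_of_exponent_le (by norm_num)
    nlinarith [mul_le_mul_of_nonneg_left (mul_le_mul_of_nonneg_right h1 h2) hδ.le]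
  have h1 := hAd _ _ hj hk
  by_cases hkj : k ≤ j
  · have hn : (0:ℝ) ≤ ((j - k : ℤ) : ℝ) := by exact_mod_cast (by omega : (0:ℤ) ≤ j - k)
    have habs : |((k - j : ℤ) : ℝ)| = ((j - k : ℤ) : ℝ) := by
      rw [← abs_of_nonneg hn, ← abs_neg]; congr 1; push_cast; ring
    rw [if_pos hkj, mul_one, habs]
    have hup := H.up k j hkj
    have hx : 0 < rho j / rho k := by positivity
    have key := kernel_real (δ := δ) (x := rho j / rho k) (ν := θ - ε) hC hx hn hδ (by
      rw [mul_div_assoc', le_div_iff₀ hk]; linarith) hε0 (by linarith)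
    rw [show -(ε + (θ - ε)) = -θ by ring, inv_div] at key
    have hp2 := hpow (θ - ε) _ (by linarith) hn
    have e1 : rho j ^ (-θ) = (rho j / rho k) ^ (-θ) * rho k ^ (-θ) := by
      rw [← Real.mul_rpow hx.le hk.le, div_mul_cancel₀ _ hk.ne']
    calc rho j ^ (-θ) * a (rho j)
        ≤ rho j ^ (-θ) * (A * max (rho j / rho k) (rho k / rho j) ^ ε * a (rho k)) := by
          apply mul_le_mul_of_nonneg_left h1 (by positivity)
      _ = A * ((rho j / rho k) ^ (-θ) * max (rho j / rho k) (rho k / rho j) ^ ε) *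
          (rho k ^ (-θ) * a (rho k)) := by rw [e1]; ring
      _ ≤ A * ((C ^ (2 * ε + (θ - ε)) + C ^ (2 * ε + (1 - θ - ε))) *
          2 ^ (-(δ * ε) * ((j - k : ℤ) : ℝ))) * (rho k ^ (-θ) * a (rho k)) := by
          apply mul_le_mul_of_nonneg_right _ (by positivity)
          apply mul_le_mul_of_nonneg_left _ hA.le
          refine key.trans ?_
          apply mul_le_mul _ hp2 (by positivity) (by positivity)
          linarith
      _ = _ := by ring
  · have hn : (0:ℝ) ≤ ((k - j : ℤ) : ℝ) := by exact_mod_cast (by omega : (0:ℤ) ≤ k - j)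
    rw [if_neg hkj, abs_of_nonneg hn]
    have hup := H.up j k (by omega)
    have hx : 0 < rho k / rho j := by positivity
    have key := kernel_real (δ := δ) (x := rho k / rho j) (ν := 1 - θ - ε) hC hx hn hδ (by
      rw [mul_div_assoc', le_div_iff₀ hj]; linarith) hε0 (by linarith)
    rw [show -(ε + (1 - θ - ε)) = θ - 1 by ring, inv_div, max_comm] at key
    have hp2 := hpow (1 - θ - ε) _ (by linarith) hn
    have e1 : rho j ^ (-θ) * (rho j / rho k) = (rho k / rho j) ^ (θ - 1) * rho k ^ (-θ) := by
      rw [Real.div_rpow hk.le hj.le, Real.rpow_sub_one hk.ne', Real.rpow_sub_one hj.ne',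
        Real.rpow_neg hk.le, Real.rpow_neg hj.le]
      have : 0 < rho k ^ θ := by positivity
      have : 0 < rho j ^ θ := by positivity
      field_simp
    calc rho j ^ (-θ) * a (rho j) * (rho j / rho k)
        ≤ rho j ^ (-θ) * (A * max (rho j / rho k) (rho k / rho j) ^ ε * a (rho k)) *
          (rho j / rho k) := by
          apply mul_le_mul_of_nonneg_right _ (by positivity)
          apply mul_le_mul_of_nonneg_left h1 (by positivity)
      _ = A * max (rho j / rho k) (rho k / rho j) ^ ε * a (rho k) *
          (rho j ^ (-θ) * (rho j / rho k)) := by ring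
      _ = A * ((rho k / rho j) ^ (θ - 1) * max (rho j / rho k) (rho k / rho j) ^ ε) *
          (rho k ^ (-θ) * a (rho k)) := by rw [e1]; ring
      _ ≤ A * ((C ^ (2 * ε + (θ - ε)) + C ^ (2 * ε + (1 - θ - ε))) *
          2 ^ (-(δ * ε) * ((k - j : ℤ) : ℝ))) * (rho k ^ (-θ) * a (rho k)) := by
          apply mul_le_mul_of_nonneg_right _ (by positivity)
          apply mul_le_mul_of_nonneg_left _ hA.le
          refine key.trans ?_
          apply mul_le_mul _ hp2 (by positivity) (by positivity)
          linarith
      _ = _ := by ring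

lemma two_zpow_rpow (k : ℤ) (s : ℝ) : ((2:ℝ) ^ k) ^ s = 2 ^ (s * k) := by
  rw [← Real.rpow_intCast, ← Real.rpow_mul (by norm_num), mul_comm]

lemma geo_sum {p : ℝ≥0∞} (h0 : 0 < p) {δ A W : ℝ} (hA : 0 ≤ A) (j : ℤ) {v : ℤ → ℝ}
    (hv : ∀ k, v k ≤ A * 2 ^ (-δ * |((k - j : ℤ) : ℝ)|) * W) :
    ell p (fun k => ENNReal.ofReal (v k)) ≤ ENNReal.ofReal A *
      ell p (fun m => ENNReal.ofReal ((2 : ℝ) ^ (-δ * |(m : ℝ)|))) * ENNReal.ofReal W := by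
  rw [← ell_shift p j, ← ell_const_mul h0, ← ell_mul_const h0]
  refine ell_mono fun k => ?_
  rw [← ENNReal.ofReal_mul hA, ← ENNReal.ofReal_mul (by positivity)]
  have := hv (k + j)
  rw [add_sub_cancel_right] at this
  exact ENNReal.ofReal_le_ofReal this

/-- first geometric sum -/
lemma geo_min {p : ℝ≥0∞} (h0 : 0 < p) (hp : p ≠ ∞) {d : ℤ → ℝ} (hd : DPot d) {s : ℝ} (hs : 0 < s)
    (hs' : s < 1) : ∃ C : ℝ≥0∞, C ≠ ∞ ∧ ∀ j : ℤ,
      ell p (fun k => ENNReal.ofReal (((2:ℝ) ^ k) ^ (-s) * d k * min 1 (2 ^ k / 2 ^ j))) ≤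
        C * ENNReal.ofReal (((2:ℝ) ^ j) ^ (-s) * d j) := by
  set ε := min s (1 - s) / 2 with hε
  have hm : 0 < min s (1 - s) := lt_min hs (by linarith)
  have hε0 : 0 < ε := by positivity
  have hε1 : 2 * ε ≤ s := by rw [hε]; linarith [min_le_left s (1 - s)]
  have hε2 : 2 * ε ≤ 1 - s := by rw [hε]; linarith [min_le_right s (1 - s)]
  obtain ⟨A, hA, hAd⟩ := hd.2 ε hε0
  refine ⟨_, ENNReal.mul_ne_top ENNReal.ofReal_ne_top (ell_geom h0 hp hε0), fun j =>
    geo_sum h0 hA.le j fun k => ?_⟩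
  have hdj := hd.1 j
  have h1 : (2:ℝ) ^ (-s * k) * min 1 (2 ^ k / 2 ^ j) * 2 ^ (ε * |((k - j : ℤ) : ℝ)|) ≤
      2 ^ (-ε * |((k - j : ℤ) : ℝ)|) * 2 ^ (-s * j) := by
    rw [← Real.rpow_add (by norm_num)]
    rcases le_total k j with hkj | hkj
    · have hn : (k:ℝ) ≤ j := by exact_mod_cast hkj
      calc _ ≤ (2:ℝ) ^ (-s * k) * (2 ^ k / 2 ^ j) * 2 ^ (ε * |((k - j : ℤ) : ℝ)|) := by
            gcongr; exact min_le_right _ _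
        _ = 2 ^ (-s * k + (k - j) + ε * |((k - j : ℤ) : ℝ)|) := by
            rw [Real.rpow_add (by norm_num), Real.rpow_add (by norm_num),
              Real.rpow_sub (by norm_num), Real.rpow_intCast, Real.rpow_intCast]
        _ ≤ _ := by
            apply Real.rpow_le_rpow_of_exponent_le (by norm_num)
            push_cast
            rw [abs_of_nonpos (by linarith)]
            nlinarith
    · have hn : (j:ℝ) ≤ k := by exact_mod_cast hkj
      calc _ ≤ (2:ℝ) ^ (-s * k) * 1 * 2 ^ (ε * |((k - j : ℤ) : ℝ)|) := by
            gcongr; exact min_le_left _ _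
        _ = 2 ^ (-s * k + ε * |((k - j : ℤ) : ℝ)|) := by
            rw [Real.rpow_add (by norm_num), mul_one]
        _ ≤ _ := by
            apply Real.rpow_le_rpow_of_exponent_le (by norm_num)
            push_cast
            rw [abs_of_nonneg (by linarith)]
            nlinarith
  rw [two_zpow_rpow, two_zpow_rpow]
  have hmin : (0:ℝ) ≤ min 1 (2 ^ k / 2 ^ j) := by positivity
  calc (2:ℝ) ^ (-s * k) * d k * min 1 (2 ^ k / 2 ^ j)
      ≤ (2:ℝ) ^ (-s * k) * (A * 2 ^ (ε * |((k - j : ℤ) : ℝ)|) * d j) * min 1 (2 ^ k / 2 ^ j) := by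
        apply mul_le_mul_of_nonneg_right _ hmin
        apply mul_le_mul_of_nonneg_left (hAd k j) (by positivity)
    _ = A * d j * ((2:ℝ) ^ (-s * k) * min 1 (2 ^ k / 2 ^ j) * 2 ^ (ε * |((k - j : ℤ) : ℝ)|)) := by
        ring
    _ ≤ A * d j * (2 ^ (-ε * |((k - j : ℤ) : ℝ)|) * 2 ^ (-s * j)) := by
        apply mul_le_mul_of_nonneg_left h1 (by positivity)
    _ = _ := by ring

/-- second geometric sum -/
lemma geo_tail {p : ℝ≥0∞} (h0 : 0 < p) (hp : p ≠ ∞) {d : ℤ → ℝ} (hd : DPot d) :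
    ∃ C : ℝ≥0∞, C ≠ ∞ ∧ ∀ j : ℤ,
      ell p (fun k => ENNReal.ofReal (if k ≤ j then 0 else ((2:ℝ) ^ k) ^ (-1:ℝ) * d k)) ≤
        C * ENNReal.ofReal (((2:ℝ) ^ j) ^ (-1:ℝ) * d j) := by
  have hε0 : (0:ℝ) < 1 / 2 := by norm_num
  obtain ⟨A, hA, hAd⟩ := hd.2 (1 / 2) hε0
  refine ⟨_, ENNReal.mul_ne_top ENNReal.ofReal_ne_top (ell_geom h0 hp hε0), fun j =>
    geo_sum h0 hA.le j fun k => ?_⟩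
  have hdj := hd.1 j
  split_ifs with hkj
  · positivity
  · have hn : (j:ℝ) ≤ k := by exact_mod_cast (by omega : j ≤ k)
    rw [two_zpow_rpow, two_zpow_rpow]
    calc (2:ℝ) ^ (-1 * (k:ℝ)) * d k
        ≤ (2:ℝ) ^ (-1 * (k:ℝ)) * (A * 2 ^ (1 / 2 * |((k - j : ℤ) : ℝ)|) * d j) := by
          apply mul_le_mul_of_nonneg_left (hAd k j) (by positivity)
      _ = A * d j * ((2:ℝ) ^ (-1 * (k:ℝ) + 1 / 2 * |((k - j : ℤ) : ℝ)|)) := by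
          rw [Real.rpow_add (by norm_num)]; ring
      _ = A * d j * ((2:ℝ) ^ (-(1 / 2) * |((k - j : ℤ) : ℝ)| + -1 * (j:ℝ))) := by
          congr 2
          push_cast
          rw [abs_of_nonneg (by linarith)]
          ring
      _ = _ := by rw [Real.rpow_add (by norm_num)]; ring

/-- discrete form of the `𝓡` quasi-norm -/
def ZR (r q : ℝ≥0∞) (β x : ℤ → ℝ) (κ : ℤ → ℝ≥0∞) : ℝ≥0∞ :=
  ell r (fun i => ENNReal.ofReal (β i) * ell q (cutGE i fun k => ENNReal.ofReal (x k) * κ k))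

/-- discrete form of the limiting `θ = 1` quasi-norm -/
def ZK (r : ℝ≥0∞) (γ : ℤ → ℝ) (κ : ℤ → ℝ≥0∞) : ℝ≥0∞ :=
  ell r (fun k => ENNReal.ofReal (((2:ℝ) ^ k) ^ (-1:ℝ) * γ k) * κ k)

lemma ZR_lower {r q : ℝ≥0∞} (hr : 0 < r) (hq : 0 < q) {β x B : ℤ → ℝ}
    (hB : ∀ j, ENNReal.ofReal (B j) = ell r (cutLE j fun k => ENNReal.ofReal (β k)))
    (κ : ℤ → ℝ≥0∞) (j : ℤ) :
    ENNReal.ofReal (B j) * (ENNReal.ofReal (x j) * κ j) ≤ ZR r q β x κ := by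
  rw [hB, ← ell_mul_const hr]
  refine ell_mono fun i => ?_
  unfold cutLE
  split_ifs with hij
  · refine mul_le_mul_right ?_ _
    refine le_trans ?_ (le_ell hq _ j)
    simp [cutGE, hij]
  · simp

lemma ZR_upper {r q p : ℝ≥0∞} (hp : 0 < p) (hp' : p ≠ ∞) (hpr : p ≤ r) (hpq : p ≤ q)
    {β x B : ℤ → ℝ}
    (hB : ∀ j, ENNReal.ofReal (B j) = ell r (cutLE j fun k => ENNReal.ofReal (β k)))
    (κ : ℤ → ℝ≥0∞) :
    ZR r q β x κ ≤ ell p (fun k => ENNReal.ofReal (B k) * (ENNReal.ofReal (x k) * κ k)) := by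
  have hr := hp.trans_le hpr
  calc ZR r q β x κ ≤ ell r (fun i => ell p (fun k => ENNReal.ofReal (β i) *
        cutGE i (fun k => ENNReal.ofReal (x k) * κ k) k)) := by
        refine ell_mono fun i => ?_
        rw [ell_const_mul hp]
        exact mul_le_mul_right (ell_le_ell hp hp' hpq _) _
    _ ≤ _ := ell_minkowski hp hp' hpr _
    _ ≤ _ := by
        refine ell_mono fun k => ?_
        rw [hB, ← ell_mul_const hr]
        refine ell_mono fun i => ?_
        unfold cutGE cutLE
        split_ifs <;> simp

lemma ZK_lower {r : ℝ≥0∞} (hr : 0 < r) {γ G : ℤ → ℝ}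
    (hG : ∀ j, ENNReal.ofReal (G j) = ell r (cutLE j fun k => ENNReal.ofReal (γ k)))
    (κ : ℤ → ℝ≥0∞) (j : ℤ)
    (hκ : ∀ k, k ≤ j → ENNReal.ofReal (((2:ℝ) ^ j) ^ (-1:ℝ)) * κ j ≤
      ENNReal.ofReal (((2:ℝ) ^ k) ^ (-1:ℝ)) * κ k) :
    ENNReal.ofReal (G j) * (ENNReal.ofReal (((2:ℝ) ^ j) ^ (-1:ℝ)) * κ j) ≤ ZK r γ κ := by
  rw [hG, ← ell_mul_const hr]
  refine ell_mono fun k => ?_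
  unfold cutLE
  split_ifs with hkj
  · rw [ENNReal.ofReal_mul (by positivity), mul_comm (ENNReal.ofReal _) (ENNReal.ofReal (γ k)),
      mul_assoc]
    exact mul_le_mul_right (hκ k hkj) _
  · simp

lemma ofReal_mul3 {a b : ℝ} (ha : 0 ≤ a) (x : ℝ≥0∞) :
    ENNReal.ofReal (a * b) * x = ENNReal.ofReal b * (ENNReal.ofReal a * x) := by
  rw [ENNReal.ofReal_mul ha]; ring

lemma Z_upper {r₀ q₀ r₁ p : ℝ≥0∞} (hp : 0 < p) (hp' : p ≠ ∞) (hpr₀ : p ≤ r₀) (hpq₀ : p ≤ q₀)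
    (hpr₁ : p ≤ r₁) {β α B γ G : ℤ → ℝ} {s : ℝ} (hs : 0 < s) (hs' : s < 1)
    (hB : ∀ j, ENNReal.ofReal (B j) = ell r₀ (cutLE j fun k => ENNReal.ofReal (β k)))
    (hG : ∀ j, ENNReal.ofReal (G j) = ell r₁ (cutLE j fun k => ENNReal.ofReal (γ k)))
    (hα : DPot α) (hBd : DPot B) (hGd : DPot G) (Cq : ℝ≥0∞) (hCq : Cq ≠ ∞) :
    ∃ C : ℝ≥0∞, C ≠ ∞ ∧ ∀ (j : ℤ) (κ₀ κ₁ K : ℤ → ℝ≥0∞) (D : ℝ≥0∞) (R : ℝ), 0 ≤ R →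
      R * (((2:ℝ) ^ j) ^ (-1:ℝ) * G j) = ((2:ℝ) ^ j) ^ (-s) * (α j * B j) →
      (∀ k, κ₀ k ≤ Cq * ((if k ≤ j then K k else 0) +
        ENNReal.ofReal (min 1 (2 ^ k / 2 ^ j)) * D)) →
      (∀ k, k ≤ j → κ₁ k ≤ ENNReal.ofReal (2 ^ k / 2 ^ j) * D) →
      (∀ k, j < k → κ₁ k ≤ Cq * (K k + D)) →
      ZR r₀ q₀ β (fun k => ((2:ℝ) ^ k) ^ (-s) * α k) κ₀ + ENNReal.ofReal R * ZK r₁ γ κ₁ ≤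
        C * (ENNReal.ofReal (((2:ℝ) ^ j) ^ (-s) * (α j * B j)) * D +
          ell p (fun k => ENNReal.ofReal (if k ≤ j then ((2:ℝ) ^ k) ^ (-s) * (α k * B k)
            else R * (((2:ℝ) ^ k) ^ (-1:ℝ) * G k)) * K k)) := by
  obtain ⟨Cp, hCp, hadd⟩ := ell_add hp
  obtain ⟨C₁, hC₁, hadd₁⟩ := ell_add (hp.trans_le hpr₁)
  obtain ⟨Cm, hCm, hmin⟩ := geo_min hp hp' (hα.mul hBd) hs hs'
  obtain ⟨Ct, hCt, htail⟩ := geo_tail hp hp' hGd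
  refine ⟨Cq * (Cp * (1 + Cm)) + C₁ * (1 + Cq * (Cp * (1 + Ct))), ?_, ?_⟩
  · finiteness
  intro j κ₀ κ₁ K D R hR hRj h₀ h₁ h₂
  set S := ell p (fun k => ENNReal.ofReal (if k ≤ j then ((2:ℝ) ^ k) ^ (-s) * (α k * B k)
            else R * (((2:ℝ) ^ k) ^ (-1:ℝ) * G k)) * K k) with hS
  set W := ENNReal.ofReal (((2:ℝ) ^ j) ^ (-s) * (α j * B j)) with hW
  have hγG : ∀ k, ENNReal.ofReal (γ k) ≤ ENNReal.ofReal (G k) := by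
    intro k
    rw [hG]
    refine le_trans ?_ (le_ell (hp.trans_le hpr₁) _ k)
    simp [cutLE]
  -- the first functional
  have hZ₀ : ZR r₀ q₀ β (fun k => ((2:ℝ) ^ k) ^ (-s) * α k) κ₀ ≤
      Cq * (Cp * (1 + Cm)) * (W * D + S) := by
    calc _ ≤ _ := ZR_upper hp hp' hpr₀ hpq₀ hB κ₀
      _ ≤ ell p (fun k => Cq * (ENNReal.ofReal (if k ≤ j then ((2:ℝ) ^ k) ^ (-s) * (α k * B k)
            else R * (((2:ℝ) ^ k) ^ (-1:ℝ) * G k)) * K k +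
            ENNReal.ofReal (((2:ℝ) ^ k) ^ (-s) * (α k * B k) * min 1 (2 ^ k / 2 ^ j)) * D)) := by
          refine ell_mono fun k => ?_
          have hαk := hα.1 k
          have hBk := hBd.1 k
          calc _ ≤ ENNReal.ofReal (B k) * (ENNReal.ofReal (((2:ℝ) ^ k) ^ (-s) * α k) *
                (Cq * ((if k ≤ j then K k else 0) +
                ENNReal.ofReal (min 1 (2 ^ k / 2 ^ j)) * D))) :=
                mul_le_mul_right (mul_le_mul_right (h₀ k) _) _
            _ = Cq * (ENNReal.ofReal (((2:ℝ) ^ k) ^ (-s) * (α k * B k)) *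
                (if k ≤ j then K k else 0) +
                ENNReal.ofReal (((2:ℝ) ^ k) ^ (-s) * (α k * B k) * min 1 (2 ^ k / 2 ^ j)) * D) := by
                rw [ENNReal.ofReal_mul (p := ((2:ℝ) ^ k) ^ (-s) * (α k * B k)) (by positivity),
                  show ((2:ℝ) ^ k) ^ (-s) * (α k * B k) = B k * (((2:ℝ) ^ k) ^ (-s) * α k) by ring,
                  ENNReal.ofReal_mul hBk.le]
                ring
            _ ≤ _ := by
                refine mul_le_mul_right (add_le_add_left ?_ _) _
                split_ifs <;> simp
      _ ≤ Cq * (Cp * (S + (Cm * W) * D)) := by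
          rw [ell_const_mul hp]
          refine mul_le_mul_right ((hadd _ _).trans ?_) _
          refine mul_le_mul_right (add_le_add_right ?_ _) _
          rw [ell_mul_const hp]
          exact mul_le_mul_left (hmin j) _
      _ ≤ Cq * (Cp * ((1 + Cm) * (W * D + S))) := by
          refine mul_le_mul_right (mul_le_mul_right ?_ _) _
          calc S + Cm * W * D ≤ S + Cm * W * D + (W * D + Cm * S) := le_self_add
            _ = _ := by ring
      _ = _ := by ring
  have hZ₁ : ENNReal.ofReal R * ZK r₁ γ κ₁ ≤
      C₁ * (1 + Cq * (Cp * (1 + Ct))) * (W * D + S) := by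
    have hsplit : ZK r₁ γ κ₁ ≤ C₁ * (ENNReal.ofReal (G j) *
        (ENNReal.ofReal (((2:ℝ) ^ j) ^ (-1:ℝ)) * D) + Cq * (Cp *
          (ell p (fun k => ENNReal.ofReal (if k ≤ j then 0 else ((2:ℝ) ^ k) ^ (-1:ℝ) * G k) * K k) +
          ell p (fun k => ENNReal.ofReal (if k ≤ j then 0 else ((2:ℝ) ^ k) ^ (-1:ℝ) * G k)) * D))) := by
      calc ZK r₁ γ κ₁ ≤ ell r₁ (fun k => cutLE j (fun k => ENNReal.ofReal (γ k)) k *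
            (ENNReal.ofReal (((2:ℝ) ^ j) ^ (-1:ℝ)) * D) +
            Cq * (ENNReal.ofReal (if k ≤ j then 0 else ((2:ℝ) ^ k) ^ (-1:ℝ) * G k) * K k +
              ENNReal.ofReal (if k ≤ j then 0 else ((2:ℝ) ^ k) ^ (-1:ℝ) * G k) * D)) := by
            refine ell_mono fun k => ?_
            rw [ofReal_mul3 (by positivity)]
            unfold cutLE
            by_cases hkj : k ≤ j
            · simp only [if_pos hkj]
              refine le_trans ?_ le_self_add
              refine mul_le_mul_right ?_ _
              calc _ ≤ ENNReal.ofReal (((2:ℝ) ^ k) ^ (-1:ℝ)) * (ENNReal.ofReal (2 ^ k / 2 ^ j) * D) :=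
                    mul_le_mul_right (h₁ k hkj) _
                _ = _ := by
                    rw [← mul_assoc, ← ENNReal.ofReal_mul (by positivity)]
                    congr 2
                    rw [Real.rpow_neg_one, Real.rpow_neg_one]
                    field_simp
            · simp only [if_neg hkj, zero_mul, zero_add]
              calc _ ≤ ENNReal.ofReal (G k) * (ENNReal.ofReal (((2:ℝ) ^ k) ^ (-1:ℝ)) *
                    (Cq * (K k + D))) :=
                    mul_le_mul' (hγG k) (mul_le_mul_right (h₂ k (by omega)) _)
                _ = _ := by
                    rw [ENNReal.ofReal_mul (by positivity)]; ring
        _ ≤ _ := by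
            refine (hadd₁ _ _).trans ?_
            refine mul_le_mul_right (add_le_add ?_ ?_) _
            · rw [ell_mul_const (hp.trans_le hpr₁), ← hG]
            · refine (ell_le_ell hp hp' hpr₁ _).trans ?_
              rw [ell_const_mul hp]
              refine mul_le_mul_right ((hadd _ _).trans ?_) _
              rw [ell_mul_const hp _ (fun k => ENNReal.ofReal _)]
    have hRW : ENNReal.ofReal R * ENNReal.ofReal (((2:ℝ) ^ j) ^ (-1:ℝ) * G j) = W := by
      rw [← ENNReal.ofReal_mul hR, hRj]
    have hRS : ENNReal.ofReal R *
        ell p (fun k => ENNReal.ofReal (if k ≤ j then 0 else ((2:ℝ) ^ k) ^ (-1:ℝ) * G k) * K k)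
        ≤ S := by
      rw [← ell_const_mul hp]
      refine ell_mono fun k => ?_
      split_ifs with hkj
      · simp
      · rw [← mul_assoc, ← ENNReal.ofReal_mul hR]
    have hRG : ENNReal.ofReal R *
        ell p (fun k => ENNReal.ofReal (if k ≤ j then 0 else ((2:ℝ) ^ k) ^ (-1:ℝ) * G k)) ≤ Ct * W := by
      calc _ ≤ ENNReal.ofReal R * (Ct * ENNReal.ofReal (((2:ℝ) ^ j) ^ (-1:ℝ) * G j)) :=
            mul_le_mul_right (htail j) _
        _ = _ := by rw [← hRW]; ring
    set X := ell p (fun k => ENNReal.ofReal (if k ≤ j then 0 else ((2:ℝ) ^ k) ^ (-1:ℝ) * G k) * K k)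
    set Y := ell p (fun k => ENNReal.ofReal (if k ≤ j then 0 else ((2:ℝ) ^ k) ^ (-1:ℝ) * G k))
    have hGj : ENNReal.ofReal R * (ENNReal.ofReal (G j) *
        (ENNReal.ofReal (((2:ℝ) ^ j) ^ (-1:ℝ)) * D)) = W * D := by
      rw [← hRW, ENNReal.ofReal_mul (p := ((2:ℝ) ^ j) ^ (-1:ℝ)) (by positivity)]; ring
    calc _ ≤ _ := mul_le_mul_right hsplit _
      _ = C₁ * (ENNReal.ofReal R * (ENNReal.ofReal (G j) *
          (ENNReal.ofReal (((2:ℝ) ^ j) ^ (-1:ℝ)) * D)) +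
          Cq * (Cp * (ENNReal.ofReal R * X + (ENNReal.ofReal R * Y) * D))) := by ring
      _ ≤ C₁ * (W * D + Cq * (Cp * (S + Ct * W * D))) := by
          rw [hGj]
          refine mul_le_mul_right (add_le_add_right (mul_le_mul_right (mul_le_mul_right
            (add_le_add hRS (mul_le_mul_left hRG _)) _) _) _) _
      _ ≤ C₁ * ((W * D + Cq * (Cp * (S + Ct * W * D))) + (S + Cq * (Cp * (W * D + Ct * S)))) :=
          mul_le_mul_right le_self_add _
      _ = _ := by ring
  calc _ ≤ _ := add_le_add hZ₀ hZ₁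
    _ = _ := by ring

lemma QuasiBanach.N_neg (A : QuasiBanach E) (x : E) : A.N (-x) = A.N x := by
  have := A.smul (-1) x
  simpa using this

lemma Kbar_lower (A₀ A₁ : QuasiBanach E) {r₀ q₀ r₁ : ℝ≥0∞} (hr₀ : 0 < r₀) (hq₀ : 0 < q₀)
    (hr₁ : 0 < r₁) {b₀ a₀ b₁ : ℝ → ℝ} (hb₀ : Pot b₀) (ha₀ : Pot a₀) (hb₁ : Pot b₁) {s : ℝ}
    {B G rho : ℤ → ℝ}
    (hB : ∀ j, ENNReal.ofReal (B j) =
      ell r₀ (cutLE j fun k => ENNReal.ofReal (b₀ (2 ^ k) / a₀ (2 ^ k))))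
    (hG : ∀ j, ENNReal.ofReal (G j) = ell r₁ (cutLE j fun k => ENNReal.ofReal (b₁ (2 ^ k))))
    (hrho : ∀ j, 0 < rho j)
    (hR : ∀ j, rho j * (((2:ℝ) ^ j) ^ (-1:ℝ) * G j) = ((2:ℝ) ^ j) ^ (-s) * (a₀ (2 ^ j) * B j)) :
    ∃ C : ℝ≥0∞, C ≠ ∞ ∧ ∀ (j : ℤ) (f : E),
      ENNReal.ofReal (((2:ℝ) ^ j) ^ (-s) * (a₀ (2 ^ j) * B j)) * Kf A₀.N A₁.N (2 ^ j) f ≤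
        C * Kf (normR A₀.N A₁.N s r₀ q₀ b₀ a₀) (normK A₀.N A₁.N 1 r₁ b₁) (rho j) f := by
  obtain ⟨Cq, -, hCq, hq⟩ := Kf_quasi A₀ A₁
  obtain ⟨M₀, hM₀, h₀⟩ := normR_disc (E := E) hr₀ hq₀ s hb₀ ha₀
  obtain ⟨C₁, hC₁, hl₁⟩ := hb₁.loc
  obtain ⟨M₁, hM₁, h₁⟩ := normK_disc (E := E) hr₁ 1 hC₁ hl₁
    (fun j => (hb₁.1 _ (two_zpow_pos j)).le) (fun t ht => (hb₁.1 t ht).le)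
  refine ⟨Cq * (M₀ + M₁) + 1, by finiteness, fun j f => ?_⟩
  have hne0 : Cq * (M₀ + M₁) + 1 ≠ 0 := by simp
  have hnet : Cq * (M₀ + M₁) + 1 ≠ ∞ := by finiteness
  unfold Kf
  rw [ENNReal.mul_iInf_of_ne hne0 hnet]
  refine le_iInf fun g => ?_
  change ENNReal.ofReal (((2:ℝ) ^ j) ^ (-s) * (a₀ (2 ^ j) * B j)) * Kf A₀.N A₁.N (2 ^ j) f ≤ _
  set W := ENNReal.ofReal (((2:ℝ) ^ j) ^ (-s) * (a₀ (2 ^ j) * B j)) with hW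
  have hapos := ha₀.1 _ (two_zpow_pos j)
  have hj := two_zpow_pos j
  have hg : W * Kf A₀.N A₁.N (2 ^ j) g ≤ M₀ * normR A₀.N A₁.N s r₀ q₀ b₀ a₀ g := by
    refine le_trans ?_ (h₀ A₀.N A₁.N g).2
    refine le_trans (le_of_eq ?_) (ZR_lower hr₀ hq₀ hB (x := fun k => ((2:ℝ) ^ k) ^ (-s) * a₀ (2 ^ k))
      (fun k => Kf A₀.N A₁.N (2 ^ k) g) j)
    rw [hW, ← mul_assoc, ofReal_mul3 (by positivity)]
  have hfg : W * Kf A₀.N A₁.N (2 ^ j) (f - g) ≤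
      M₁ * (ENNReal.ofReal (rho j) * normK A₀.N A₁.N 1 r₁ b₁ (f - g)) := by
    calc W * Kf A₀.N A₁.N (2 ^ j) (f - g) = ENNReal.ofReal (rho j) * (ENNReal.ofReal (G j) *
          (ENNReal.ofReal (((2:ℝ) ^ j) ^ (-1:ℝ)) * Kf A₀.N A₁.N (2 ^ j) (f - g))) := by
          rw [hW, ← hR, ENNReal.ofReal_mul (hrho j).le, ENNReal.ofReal_mul (by positivity)]
          ring
      _ ≤ ENNReal.ofReal (rho j) * (M₁ * normK A₀.N A₁.N 1 r₁ b₁ (f - g)) := by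
          refine mul_le_mul_right ?_ _
          refine le_trans ?_ (h₁ A₀.N A₁.N (f - g)).2
          refine ZK_lower hr₁ hG (fun k => Kf A₀.N A₁.N (2 ^ k) (f - g)) j fun k hk => ?_
          have hkp := two_zpow_pos k
          have h2 : (2:ℝ) ^ k ≤ 2 ^ j := zpow_le_zpow_right₀ (by norm_num) hk
          calc _ ≤ ENNReal.ofReal (((2:ℝ) ^ j) ^ (-1:ℝ)) * (ENNReal.ofReal (2 ^ j / 2 ^ k) *
                Kf A₀.N A₁.N (2 ^ k) (f - g)) :=
                mul_le_mul_right (Kf_scale A₀.N A₁.N hkp h2 (f - g)) _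
            _ = _ := by
                rw [← mul_assoc, ← ENNReal.ofReal_mul (by positivity)]
                congr 2
                rw [Real.rpow_neg_one, Real.rpow_neg_one]
                field_simp
      _ = _ := by ring
  set X := normR A₀.N A₁.N s r₀ q₀ b₀ a₀ g
  set Y := ENNReal.ofReal (rho j) * normK A₀.N A₁.N 1 r₁ b₁ (f - g)
  have hsum := hq (2 ^ j) g (f - g)
  rw [add_sub_cancel] at hsum
  calc W * Kf A₀.N A₁.N (2 ^ j) f ≤ W * (Cq * (Kf A₀.N A₁.N (2 ^ j) g +
        Kf A₀.N A₁.N (2 ^ j) (f - g))) := mul_le_mul_right hsum _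
    _ = Cq * (W * Kf A₀.N A₁.N (2 ^ j) g + W * Kf A₀.N A₁.N (2 ^ j) (f - g)) := by ring
    _ ≤ Cq * (M₀ * X + M₁ * Y) := mul_le_mul_right (add_le_add hg hfg) _
    _ ≤ Cq * (M₀ * X + M₁ * Y) + (Cq * (M₁ * X + M₀ * Y) + (X + Y)) := le_self_add
    _ = _ := by ring

lemma Kbar_upper (A₀ A₁ : QuasiBanach E) {r₀ q₀ r₁ p : ℝ≥0∞} (hp : 0 < p) (hp' : p ≠ ∞)
    (hpr₀ : p ≤ r₀) (hpq₀ : p ≤ q₀) (hpr₁ : p ≤ r₁)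
    {b₀ a₀ b₁ : ℝ → ℝ} (hb₀ : Pot b₀) (ha₀ : Pot a₀) (hb₁ : Pot b₁) {s : ℝ}
    (hs : 0 < s) (hs' : s < 1) {B G rho : ℤ → ℝ}
    (hB : ∀ j, ENNReal.ofReal (B j) =
      ell r₀ (cutLE j fun k => ENNReal.ofReal (b₀ (2 ^ k) / a₀ (2 ^ k))))
    (hG : ∀ j, ENNReal.ofReal (G j) = ell r₁ (cutLE j fun k => ENNReal.ofReal (b₁ (2 ^ k))))
    (hBd : DPot B) (hGd : DPot G) (hrho : ∀ j, 0 < rho j)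
    (hR : ∀ j, rho j * (((2:ℝ) ^ j) ^ (-1:ℝ) * G j) = ((2:ℝ) ^ j) ^ (-s) * (a₀ (2 ^ j) * B j)) :
    ∃ C : ℝ≥0∞, C ≠ ∞ ∧ ∀ (j : ℤ) (f : E),
      Kf (normR A₀.N A₁.N s r₀ q₀ b₀ a₀) (normK A₀.N A₁.N 1 r₁ b₁) (rho j) f ≤
        C * ell p (fun k => ENNReal.ofReal (if k ≤ j then ((2:ℝ) ^ k) ^ (-s) * (a₀ (2 ^ k) * B k)
            else rho j * (((2:ℝ) ^ k) ^ (-1:ℝ) * G k)) * Kf A₀.N A₁.N (2 ^ k) f) := by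
  have hr₀ := hp.trans_le hpr₀
  have hq₀ := hp.trans_le hpq₀
  have hr₁ := hp.trans_le hpr₁
  obtain ⟨Cq, hCq1, hCq, hq⟩ := Kf_quasi A₀ A₁
  obtain ⟨M₀, hM₀, h₀⟩ := normR_disc (E := E) hr₀ hq₀ s hb₀ ha₀
  obtain ⟨C₁, hC₁, hl₁⟩ := hb₁.loc
  obtain ⟨M₁, hM₁, h₁⟩ := normK_disc (E := E) hr₁ 1 hC₁ hl₁
    (fun j => (hb₁.1 _ (two_zpow_pos j)).le) (fun t ht => (hb₁.1 t ht).le)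
  obtain ⟨C, hC, hZ⟩ := Z_upper hp hp' hpr₀ hpq₀ hpr₁ hs hs' hB hG ha₀.dpot hBd hGd Cq hCq
  refine ⟨((M₀ + M₁) * C + 1) * 2, by finiteness, fun j f => ?_⟩
  set S := ell p (fun k => ENNReal.ofReal (if k ≤ j then ((2:ℝ) ^ k) ^ (-s) * (a₀ (2 ^ k) * B k)
            else rho j * (((2:ℝ) ^ k) ^ (-1:ℝ) * G k)) * Kf A₀.N A₁.N (2 ^ k) f) with hS
  set w : ℝ := ((2:ℝ) ^ j) ^ (-s) * (a₀ (2 ^ j) * B j) with hw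
  have hj := two_zpow_pos j
  have hwp : 0 < w := by
    have := ha₀.1 _ hj
    have := hBd.1 j
    positivity
  set C' := (M₀ + M₁) * C + 1 with hC'
  have hC't : C' ≠ ∞ := by finiteness
  have key : ∀ g : E,
      Kf (normR A₀.N A₁.N s r₀ q₀ b₀ a₀) (normK A₀.N A₁.N 1 r₁ b₁) (rho j) f ≤
      C' * (ENNReal.ofReal w * (A₀.N g + ENNReal.ofReal (2 ^ j) * A₁.N (f - g)) + S) := by
    intro g
    set D := A₀.N g + ENNReal.ofReal (2 ^ j) * A₁.N (f - g) with hD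
    have hlin : ∀ k : ℤ, ENNReal.ofReal (2 ^ k) * A₁.N (f - g) ≤
        ENNReal.ofReal (2 ^ k / 2 ^ j) * D := by
      intro k
      calc _ = ENNReal.ofReal (2 ^ k / 2 ^ j) * (ENNReal.ofReal (2 ^ j) * A₁.N (f - g)) := by
            rw [← mul_assoc, ← ENNReal.ofReal_mul (by positivity), div_mul_cancel₀ _ hj.ne']
        _ ≤ _ := mul_le_mul_right le_add_self _
    have hZ' := hZ j (fun k => Kf A₀.N A₁.N (2 ^ k) g) (fun k => Kf A₀.N A₁.N (2 ^ k) (f - g))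
      (fun k => Kf A₀.N A₁.N (2 ^ k) f) D (rho j) (hrho j).le (hR j) (by
        intro k
        by_cases hk : k ≤ j
        · have h2 : (2:ℝ) ^ k ≤ 2 ^ j := zpow_le_zpow_right₀ (by norm_num) hk
          rw [if_pos hk, min_eq_right (by rw [div_le_one hj]; exact h2)]
          have h3 := hq (2 ^ k) f (g - f)
          rw [add_sub_cancel] at h3
          refine h3.trans (mul_le_mul_right (add_le_add_right ?_ _) _)
          refine (Kf_le_one A₀ A₁ _ _).trans ?_
          rw [← neg_sub, A₁.N_neg]
          exact hlin k
        · have h2 : (2:ℝ) ^ j ≤ 2 ^ k := zpow_le_zpow_right₀ (by norm_num) (by omega)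
          rw [if_neg hk, min_eq_left (by rw [one_le_div hj]; exact h2), zero_add,
            ENNReal.ofReal_one, one_mul]
          refine (Kf_le_zero A₀ A₁ _ _).trans ?_
          exact le_trans le_self_add (le_mul_of_one_le_left zero_le hCq1)) (by
        intro k hk
        exact (Kf_le_one A₀ A₁ _ _).trans (hlin k)) (by
        intro k hk
        have h3 := hq (2 ^ k) f (-g)
        rw [← sub_eq_add_neg] at h3
        refine h3.trans (mul_le_mul_right (add_le_add_right ?_ _) _)
        refine (Kf_le_zero A₀ A₁ _ _).trans ?_
        rw [A₀.N_neg]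
        exact le_self_add)
    set X := ZR r₀ q₀ (fun k => b₀ (2 ^ k) / a₀ (2 ^ k)) (fun k => ((2:ℝ) ^ k) ^ (-s) * a₀ (2 ^ k))
      (fun k => Kf A₀.N A₁.N (2 ^ k) g)
    set Y := ZK r₁ (fun k => b₁ (2 ^ k)) (fun k => Kf A₀.N A₁.N (2 ^ k) (f - g))
    have hX : normR A₀.N A₁.N s r₀ q₀ b₀ a₀ g ≤ M₀ * X := (h₀ A₀.N A₁.N g).1
    have hY : normK A₀.N A₁.N 1 r₁ b₁ (f - g) ≤ M₁ * Y := (h₁ A₀.N A₁.N (f - g)).1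
    calc _ ≤ normR A₀.N A₁.N s r₀ q₀ b₀ a₀ g +
          ENNReal.ofReal (rho j) * normK A₀.N A₁.N 1 r₁ b₁ (f - g) := iInf_le _ g
      _ ≤ M₀ * X + ENNReal.ofReal (rho j) * (M₁ * Y) :=
          add_le_add hX (mul_le_mul_right hY _)
      _ ≤ (M₀ * X + ENNReal.ofReal (rho j) * (M₁ * Y)) +
          (M₁ * X + M₀ * (ENNReal.ofReal (rho j) * Y)) := le_self_add
      _ = (M₀ + M₁) * (X + ENNReal.ofReal (rho j) * Y) := by ring
      _ ≤ (M₀ + M₁) * (C * (ENNReal.ofReal w * D + S)) := mul_le_mul_right hZ' _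
      _ ≤ (M₀ + M₁) * (C * (ENNReal.ofReal w * D + S)) + (ENNReal.ofReal w * D + S) := le_self_add
      _ = _ := by rw [hC']; ring
  have hwS : ENNReal.ofReal w * Kf A₀.N A₁.N (2 ^ j) f ≤ S := by
    refine le_trans (le_of_eq ?_) (le_ell hp _ j)
    simp [hw]
  have h3 : Kf (normR A₀.N A₁.N s r₀ q₀ b₀ a₀) (normK A₀.N A₁.N 1 r₁ b₁) (rho j) f ≤
      C' * (ENNReal.ofReal w * Kf A₀.N A₁.N (2 ^ j) f + S) := by
    conv_rhs => unfold Kf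
    rw [ENNReal.mul_iInf_of_ne (by simpa using hwp) ENNReal.ofReal_ne_top, ENNReal.iInf_add,
      ENNReal.mul_iInf_of_ne (by simp [hC']) hC't]
    exact le_iInf key
  calc _ ≤ _ := h3
    _ ≤ C' * (S + S) := mul_le_mul_right (add_le_add_left hwS _) _
    _ = _ := by ring

/-- two positive reals comparable with constant `C` -/
def Cmp (C x y : ℝ) : Prop := 0 < x ∧ 0 < y ∧ x ≤ C * y ∧ y ≤ C * x

lemma Cmp.pos {C x y : ℝ} (h : Cmp C x y) : 0 < C := by
  obtain ⟨hx, hy, h1, -⟩ := h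
  by_contra hc
  push Not at hc
  nlinarith

lemma Cmp.mul {C C' x y x' y' : ℝ} (h : Cmp C x y) (h' : Cmp C' x' y') :
    Cmp (C * C') (x * x') (y * y') := by
  have hC := h.pos
  have hC' := h'.pos
  obtain ⟨hx, hy, h1, h2⟩ := h
  obtain ⟨hx', hy', h1', h2'⟩ := h'
  refine ⟨by positivity, by positivity, ?_, ?_⟩
  · calc x * x' ≤ (C * y) * (C' * y') := by gcongr
      _ = _ := by ring
  · calc y * y' ≤ (C * x) * (C' * x') := by gcongr
      _ = _ := by ring

lemma Cmp.inv {C x y : ℝ} (h : Cmp C x y) : Cmp C x⁻¹ y⁻¹ := by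
  have hC := h.pos
  obtain ⟨hx, hy, h1, h2⟩ := h
  refine ⟨by positivity, by positivity, ?_, ?_⟩
  · rw [← div_eq_mul_inv, le_div_iff₀ hy, inv_mul_le_iff₀ hx]; linarith
  · rw [← div_eq_mul_inv, le_div_iff₀ hx, inv_mul_le_iff₀ hy]; linarith

lemma Cmp.rpow {C x y : ℝ} (h : Cmp C x y) {s : ℝ} (hs : 0 ≤ s) : Cmp (C ^ s) (x ^ s) (y ^ s) := by
  have hC := h.pos
  obtain ⟨hx, hy, h1, h2⟩ := h
  refine ⟨by positivity, by positivity, ?_, ?_⟩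
  · rw [← Real.mul_rpow hC.le hy.le]; exact Real.rpow_le_rpow hx.le h1 hs
  · rw [← Real.mul_rpow hC.le hx.le]; exact Real.rpow_le_rpow hy.le h2 hs

lemma Pot.cmp {a : ℝ → ℝ} (ha : Pot a) : ∃ A : ℝ, 0 < A ∧ ∀ C x y, Cmp C x y →
    Cmp (A * C) (a x) (a y) := by
  obtain ⟨A, hA, hAd⟩ := ha.2 1 one_pos
  refine ⟨A, hA, fun C x y h => ?_⟩
  have hC := h.pos
  obtain ⟨hx, hy, h1, h2⟩ := h
  have hax := ha.1 x hx
  have hay := ha.1 y hy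
  have hm : max (x / y) (y / x) ≤ C := max_le (by rwa [div_le_iff₀ hy]) (by rwa [div_le_iff₀ hx])
  have hm' : max (y / x) (x / y) ≤ C := by rwa [max_comm]
  refine ⟨hax, hay, ?_, ?_⟩
  · have := hAd x y hx hy
    rw [Real.rpow_one] at this
    refine this.trans ?_
    gcongr
  · have := hAd y x hy hx
    rw [Real.rpow_one] at this
    refine this.trans ?_
    gcongr

lemma Phi_reg (N₀ N₁ : E → ℝ≥0∞) {a : ℝ → ℝ} {A : ℝ} (hA : 0 < A)
    (hcmp : ∀ C x y, Cmp C x y → Cmp (A * C) (a x) (a y)) {θ : ℝ} (hθ : 0 < θ) (f : E)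
    (M u v : ℝ) (hM : 1 ≤ M) (hu : 0 < u) (hv : 0 < v) (h1 : u ≤ M * v) (h2 : v ≤ M * u) :
    ENNReal.ofReal (u ^ (-θ) * a u) * Kf N₀ N₁ u f ≤
      (ENNReal.ofReal (M ^ θ * (A * M)) * ENNReal.ofReal M) *
        (ENNReal.ofReal (v ^ (-θ) * a v) * Kf N₀ N₁ v f) := by
  have hM0 : 0 < M := one_pos.trans_le hM
  have hc : Cmp M u v := ⟨hu, hv, h1, h2⟩
  have h3 := (hc.rpow hθ.le).inv.mul (hcmp _ _ _ hc)
  have h4 := h3.2.2.1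
  rw [← Real.rpow_neg hu.le, ← Real.rpow_neg hv.le] at h4
  have hK : Kf N₀ N₁ u f ≤ ENNReal.ofReal M * Kf N₀ N₁ v f := by
    rcases le_total u v with h | h
    · refine (Kf_mono N₀ N₁ h f).trans (le_mul_of_one_le_left zero_le ?_)
      rw [← ENNReal.ofReal_one]; exact ENNReal.ofReal_le_ofReal hM
    · refine (Kf_scale N₀ N₁ hv h f).trans (mul_le_mul_left (ENNReal.ofReal_le_ofReal ?_) _)
      rwa [div_le_iff₀ hv]
  calc _ ≤ ENNReal.ofReal (M ^ θ * (A * M) * (v ^ (-θ) * a v)) *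
        (ENNReal.ofReal M * Kf N₀ N₁ v f) := mul_le_mul' (ENNReal.ofReal_le_ofReal h4) hK
    _ = _ := by rw [ENNReal.ofReal_mul (by positivity)]; ring

theorem main_core
    (A₀ A₁ : QuasiBanach E)
    (θ θ₀ : ℝ) (hθ : 0 < θ) (hθ' : θ < 1) (hθ₀ : 0 < θ₀) (hθ₀' : θ₀ < 1)
    (q₀ r r₀ r₁ : ℝ≥0∞) (hq₀ : 0 < q₀) (hr : 0 < r) (hr₀ : 0 < r₀) (hr₁ : 0 < r₁)
    (a b₀ b₁ a₀ : ℝ → ℝ) (ha : Pot a) (hb₀ : Pot b₀) (hb₁ : Pot b₁) (ha₀ : Pot a₀)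
    (hfin₀ : LqNorm r₀ (Ioo 0 1) (svWgt r₀ (fun s => b₀ s / a₀ s)) ≠ ∞)
    (hfin₁ : LqNorm r₁ (Ioo 0 1) (svWgt r₁ (fun s => b₁ s)) ≠ ∞)
    (c₀ c₁ ρ : ℝ → ℝ)
    (hc₀ : ∀ t, c₀ t = a₀ t * (LqNorm r₀ (Ioo 0 t) (svWgt r₀ (fun s => b₀ s / a₀ s))).toReal)
    (hc₁ : ∀ t, c₁ t = (LqNorm r₁ (Ioo 0 t) (svWgt r₁ (fun s => b₁ s))).toReal)
    (hρ : ∀ t, ρ t = t ^ (1 - θ₀) * (c₀ t / c₁ t)) :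
    EquivNorms
      (normK (normR A₀.N A₁.N θ₀ r₀ q₀ b₀ a₀) (normK A₀.N A₁.N 1 r₁ b₁) θ r a)
      (normK A₀.N A₁.N ((1 - θ) * θ₀ + θ) r
        (fun t => c₀ t ^ (1 - θ) * c₁ t ^ θ * a (ρ t))) := by
  obtain ⟨B, hBd, hB, CB, hCB, hBl⟩ := partial_sum hr₀ (hb₀.div ha₀) hfin₀
  obtain ⟨G, hGd, hG, CG, hCG, hGl⟩ := partial_sum hr₁ hb₁ hfin₁
  obtain ⟨Ca, hCa, hal⟩ := ha₀.loc
  obtain ⟨A, hA, hcmp⟩ := ha.cmp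
  have hap : ∀ j : ℤ, 0 < a₀ (2 ^ j) := fun j => ha₀.1 _ (two_zpow_pos j)
  have hd₀ : DPot (fun j => a₀ (2 ^ j) * B j) := ha₀.dpot.mul hBd
  obtain ⟨Cg, hgrow⟩ := (hd₀.mul hGd.inv).grow (s := 1 - θ₀) (by linarith)
  set rho : ℤ → ℝ := fun j => ((2:ℝ) ^ j) ^ (1 - θ₀) * (a₀ (2 ^ j) * B j * (G j)⁻¹) with hrho
  have hrp := hgrow.pos
  have hR : ∀ j, rho j * (((2:ℝ) ^ j) ^ (-1:ℝ) * G j) =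
      ((2:ℝ) ^ j) ^ (-θ₀) * (a₀ (2 ^ j) * B j) := by
    intro j
    have h1 := hGd.1 j
    have hj := two_zpow_pos j
    rw [show -θ₀ = (1 - θ₀) + (-1) by ring, Real.rpow_add hj]
    simp only [hrho]
    field_simp
  -- comparison of the functions with their discretizations
  have hcm₀ : ∀ j, ∀ t ∈ dI j, Cmp (Ca * CB) (c₀ t) (a₀ (2 ^ j) * B j) := by
    intro j t ht
    have htp := dI_pos ht
    rw [hc₀]
    obtain ⟨h1, h2⟩ := hBl j t ht
    have hBj := hBd.1 j
    refine Cmp.mul ⟨ha₀.1 t htp, hap j, (hal j t ht).1, (hal j t ht).2⟩ ⟨?_, hBj, h1, h2⟩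
    by_contra hc
    push Not at hc
    nlinarith
  have hcm₁ : ∀ j, ∀ t ∈ dI j, Cmp CG (c₁ t) (G j) := by
    intro j t ht
    rw [hc₁]
    obtain ⟨h1, h2⟩ := hGl j t ht
    have hGj := hGd.1 j
    refine ⟨?_, hGj, h1, h2⟩
    by_contra hc
    push Not at hc
    have : CG * (LqNorm r₁ (Ioo 0 t) (svWgt r₁ b₁)).toReal ≤ 0 :=
      mul_nonpos_of_nonneg_of_nonpos hCG.le hc
    linarith
  have hcmρ : ∀ j, ∀ t ∈ dI j, Cmp (2 ^ |1 - θ₀| * (Ca * CB * CG)) (ρ t) (rho j) := by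
    intro j t ht
    have htp := dI_pos ht
    have hj := two_zpow_pos j
    rw [hρ, div_eq_mul_inv]
    have h1 := rpow_loc (1 - θ₀) ht
    exact Cmp.mul ⟨by positivity, by positivity, h1.1, h1.2⟩
      ((hcm₀ j t ht).mul (hcm₁ j t ht).inv)
  set v : ℤ → ℝ := fun j => (a₀ (2 ^ j) * B j) ^ (1 - θ) * G j ^ θ * a (rho j) with hv
  set b : ℝ → ℝ := fun t => c₀ t ^ (1 - θ) * c₁ t ^ θ * a (ρ t) with hb
  set Cv : ℝ := (Ca * CB) ^ (1 - θ) * CG ^ θ * (A * (2 ^ |1 - θ₀| * (Ca * CB * CG))) with hCv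
  have hcmv : ∀ j, ∀ t ∈ dI j, Cmp Cv (b t) (v j) := fun j t ht =>
    (((hcm₀ j t ht).rpow (by linarith)).mul ((hcm₁ j t ht).rpow hθ.le)).mul
      (hcmp _ _ _ (hcmρ j t ht))
  have hCv0 : 0 < Cv := by positivity
  obtain ⟨MR, hMR, hright⟩ := normK_disc (E := E) hr ((1 - θ) * θ₀ + θ) hCv0
    (fun j t ht => ⟨(hcmv j t ht).2.2.1, (hcmv j t ht).2.2.2⟩)
    (fun j => by
      have hm : (2:ℝ) ^ j ∈ dI j := ⟨le_rfl, zpow_lt_zpow_right₀ (by norm_num) (by omega)⟩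
      exact (hcmv j _ hm).2.1.le)
    (fun t ht => by
      obtain ⟨j, hj⟩ := exists_dI ht
      exact (hcmv j t hj).1.le)
  obtain ⟨Cl, hCl, hll⟩ := ha.loc
  obtain ⟨ML, hML, hleft⟩ := normK_disc (E := E) hr θ hCl hll
    (fun j => (ha.1 _ (two_zpow_pos j)).le) (fun t ht => (ha.1 t ht).le)
  obtain ⟨DT, hDT, htrans⟩ := hgrow.transfer hr
    (fun M => ENNReal.ofReal (M ^ θ * (A * M)) * ENNReal.ofReal M)
    (fun M => ENNReal.mul_ne_top ENNReal.ofReal_ne_top ENNReal.ofReal_ne_top)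
  obtain ⟨Clo, hClo, hlow⟩ := Kbar_lower A₀ A₁ hr₀ hq₀ hr₁ hb₀ ha₀ hb₁ hB hG hrp hR
  -- the small exponent
  obtain ⟨p, hp, hp', hpr₀, hpq₀, hpr₁, hpr⟩ : ∃ p : ℝ≥0∞, 0 < p ∧ p ≠ ∞ ∧ p ≤ r₀ ∧ p ≤ q₀ ∧
      p ≤ r₁ ∧ p ≤ r := by
    refine ⟨min 1 (min (min r₀ q₀) (min r₁ r)), ?_, ?_, ?_, ?_, ?_, ?_⟩
    · exact lt_min one_pos (lt_min (lt_min hr₀ hq₀) (lt_min hr₁ hr))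
    · exact ne_top_of_le_ne_top ENNReal.one_ne_top (min_le_left _ _)
    · exact (min_le_right _ _).trans ((min_le_left _ _).trans (min_le_left _ _))
    · exact (min_le_right _ _).trans ((min_le_left _ _).trans (min_le_right _ _))
    · exact (min_le_right _ _).trans ((min_le_right _ _).trans (min_le_left _ _))
    · exact (min_le_right _ _).trans ((min_le_right _ _).trans (min_le_right _ _))
  obtain ⟨Cu, hCu, hup⟩ := Kbar_upper A₀ A₁ hp hp' hpr₀ hpq₀ hpr₁ hb₀ ha₀ hb₁ hθ₀ hθ₀' hB hG
    hBd hGd hrp hR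
  obtain ⟨Dk, δ, hDk, hδ, hker⟩ := kernel_bound hgrow ha hθ hθ'
  obtain ⟨Cy, hCy, hyoung⟩ := ell_young hp hp' hpr hδ
  -- weights
  set w : ℤ → ℝ := fun j => ((2:ℝ) ^ j) ^ (-θ₀) * (a₀ (2 ^ j) * B j) with hw
  set ω : ℤ → ℝ := fun j => rho j ^ (-θ) * a (rho j) with hω
  have hwp : ∀ j, 0 < w j := fun j => by
    have := hap j
    have := hBd.1 j
    have := two_zpow_pos j
    simp only [hw]
    positivity
  have hωp : ∀ j, 0 < ω j := fun j => mul_pos (Real.rpow_pos_of_pos (hrp j) _) (ha.1 _ (hrp j))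
  have hid : ∀ j, ((2:ℝ) ^ j) ^ (-((1 - θ) * θ₀ + θ)) * v j = ω j * w j := by
    intro j
    have hj := two_zpow_pos j
    have hd := hd₀.1 j
    have hg := hGd.1 j
    beta_reduce at hd
    have e1 : rho j ^ (-θ) = ((2:ℝ) ^ j) ^ ((1 - θ₀) * (-θ)) *
        ((a₀ (2 ^ j) * B j) ^ (-θ) * G j ^ θ) := by
      simp only [hrho]
      rw [Real.mul_rpow (by positivity) (by positivity), ← Real.rpow_mul hj.le,
        Real.mul_rpow hd.le (by positivity), Real.inv_rpow hg.le, Real.rpow_neg hg.le, inv_inv]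
    simp only [hω, hw, hv]
    rw [e1, show -((1 - θ) * θ₀ + θ) = (1 - θ₀) * (-θ) + (-θ₀) by ring, Real.rpow_add hj,
      show (1 - θ) = (-θ) + 1 by ring, Real.rpow_add_one hd.ne']
    ring
  set Kb : ℝ → E → ℝ≥0∞ := Kf (normR A₀.N A₁.N θ₀ r₀ q₀ b₀ a₀) (normK A₀.N A₁.N 1 r₁ b₁) with hKb
  have hlow' : ∀ f, ell r (fun j => ENNReal.ofReal (ω j * w j) * Kf A₀.N A₁.N (2 ^ j) f) ≤
      Clo * ell r (fun j => ENNReal.ofReal (ω j) * Kb (rho j) f) := by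
    intro f
    rw [← ell_const_mul hr]
    refine ell_mono fun j => ?_
    rw [ENNReal.ofReal_mul (hωp j).le, mul_assoc]
    calc _ ≤ ENNReal.ofReal (ω j) * (Clo * Kb (rho j) f) := mul_le_mul_right (hlow j f) _
      _ = _ := by ring
  have hup' : ∀ f, ell r (fun j => ENNReal.ofReal (ω j) * Kb (rho j) f) ≤
      Cu * ENNReal.ofReal Dk * Cy *
        ell r (fun j => ENNReal.ofReal (ω j * w j) * Kf A₀.N A₁.N (2 ^ j) f) := by
    intro f
    calc _ ≤ ell r (fun j => (Cu * ENNReal.ofReal Dk) * ell p (fun k =>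
          ENNReal.ofReal ((2 : ℝ) ^ (-δ * |((k - j : ℤ) : ℝ)|)) *
            (ENNReal.ofReal (ω k * w k) * Kf A₀.N A₁.N (2 ^ k) f))) := by
          refine ell_mono fun j => ?_
          calc _ ≤ _ := mul_le_mul_right (hup j f) _
            _ = Cu * ell p (fun k => ENNReal.ofReal (ω j) * (ENNReal.ofReal (if k ≤ j then
                ((2:ℝ) ^ k) ^ (-θ₀) * (a₀ (2 ^ k) * B k)
                else rho j * (((2:ℝ) ^ k) ^ (-1:ℝ) * G k)) * Kf A₀.N A₁.N (2 ^ k) f)) := by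
                rw [ell_const_mul hp]; ring
            _ ≤ Cu * ell p (fun k => ENNReal.ofReal Dk *
                (ENNReal.ofReal ((2 : ℝ) ^ (-δ * |((k - j : ℤ) : ℝ)|)) *
                (ENNReal.ofReal (ω k * w k) * Kf A₀.N A₁.N (2 ^ k) f))) := by
                refine mul_le_mul_right (ell_mono fun k => ?_) _
                have hk := hrp k
                have e2 : (if k ≤ j then ((2:ℝ) ^ k) ^ (-θ₀) * (a₀ (2 ^ k) * B k)
                    else rho j * (((2:ℝ) ^ k) ^ (-1:ℝ) * G k)) =
                    (if k ≤ j then 1 else rho j / rho k) * w k := by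
                  split_ifs
                  · rw [one_mul]
                  · change _ = _ * (((2:ℝ) ^ k) ^ (-θ₀) * (a₀ (2 ^ k) * B k))
                    rw [← hR k, ← mul_assoc (rho j / rho k), div_mul_cancel₀ _ hk.ne']
                rw [e2]
                have e3 : ω j * ((if k ≤ j then 1 else rho j / rho k) * w k) ≤
                    Dk * (2 ^ (-δ * |((k - j : ℤ) : ℝ)|) * (ω k * w k)) := by
                  calc _ = (ω j * (if k ≤ j then 1 else rho j / rho k)) * w k := by ring
                    _ ≤ (Dk * 2 ^ (-δ * |((k - j : ℤ) : ℝ)|) * ω k) * w k :=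
                        mul_le_mul_of_nonneg_right (hker j k) (hwp k).le
                    _ = _ := by ring
                have e4 := mul_le_mul_left (ENNReal.ofReal_le_ofReal e3) (Kf A₀.N A₁.N (2 ^ k) f)
                rw [ENNReal.ofReal_mul (hωp j).le, ENNReal.ofReal_mul hDk.le,
                  ENNReal.ofReal_mul (p := (2:ℝ) ^ (-δ * |((k - j : ℤ) : ℝ)|)) (by positivity),
                  mul_assoc, mul_assoc, mul_assoc] at e4
                exact e4
            _ = _ := by rw [ell_const_mul hp]; ring
      _ = _ := ell_const_mul hr _ _
      _ ≤ _ := mul_le_mul_right (hyoung _) _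
      _ = _ := by ring
  -- assembly
  set T : E → ℝ≥0∞ := fun f => ell r (fun j => ENNReal.ofReal (ω j * w j) * Kf A₀.N A₁.N (2 ^ j) f)
  set S : E → ℝ≥0∞ := fun f => ell r (fun j => ENNReal.ofReal (ω j) * Kb (rho j) f)
  set L : E → ℝ≥0∞ := fun f => ell r (fun k => ENNReal.ofReal (((2:ℝ) ^ k) ^ (-θ) * a (2 ^ k)) *
    Kb (2 ^ k) f)
  have hTr : ∀ f, S f ≤ DT * L f ∧ L f ≤ DT * S f := fun f =>
    htrans (fun u => ENNReal.ofReal (u ^ (-θ) * a u) * Kb u f) (Phi_reg _ _ hA hcmp hθ f)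
  have hRt : ∀ f, normK A₀.N A₁.N ((1 - θ) * θ₀ + θ) r b f ≤ MR * T f ∧
      T f ≤ MR * normK A₀.N A₁.N ((1 - θ) * θ₀ + θ) r b f := by
    intro f
    have := hright A₀.N A₁.N f
    simp only [hid] at this
    exact this
  have hLt : ∀ f, normK (normR A₀.N A₁.N θ₀ r₀ q₀ b₀ a₀) (normK A₀.N A₁.N 1 r₁ b₁) θ r a f ≤
      ML * L f ∧ L f ≤ ML *
        normK (normR A₀.N A₁.N θ₀ r₀ q₀ b₀ a₀) (normK A₀.N A₁.N 1 r₁ b₁) θ r a f := fun f =>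
    hleft _ _ f
  set C1 := MR * (Clo * (DT * ML)) with hC1
  set C2 := ML * (DT * (Cu * ENNReal.ofReal Dk * Cy * MR)) with hC2
  have hC1t : C1 ≠ ∞ := by finiteness
  have hC2t : C2 ≠ ∞ := by finiteness
  refine ⟨C1 + C2 + 1, by positivity, by finiteness, fun f => ⟨?_, ?_⟩⟩
  · rw [ENNReal.inv_mul_le_iff (by simp) (by finiteness)]
    calc _ ≤ MR * T f := (hRt f).1
      _ ≤ MR * (Clo * S f) := mul_le_mul_right (hlow' f) _
      _ ≤ MR * (Clo * (DT * L f)) := mul_le_mul_right (mul_le_mul_right (hTr f).1 _) _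
      _ ≤ MR * (Clo * (DT * (ML * _))) :=
          mul_le_mul_right (mul_le_mul_right (mul_le_mul_right (hLt f).2 _) _) _
      _ = C1 * _ := by rw [hC1]; ring
      _ ≤ _ := mul_le_mul_left (by rw [add_assoc]; exact le_self_add) _
  · calc _ ≤ ML * L f := (hLt f).1
      _ ≤ ML * (DT * S f) := mul_le_mul_right (hTr f).2 _
      _ ≤ ML * (DT * (Cu * ENNReal.ofReal Dk * Cy * T f)) :=
          mul_le_mul_right (mul_le_mul_right (hup' f) _) _
      _ ≤ ML * (DT * (Cu * ENNReal.ofReal Dk * Cy * (MR * _))) :=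
          mul_le_mul_right (mul_le_mul_right (mul_le_mul_right (hRt f).2 _) _) _
      _ = C2 * _ := by rw [hC2]; ring
      _ ≤ _ := mul_le_mul_left (le_trans le_add_self le_self_add) _

theorem theorem23
    (A₀ A₁ : QuasiBanach E)
    (hne : ∃ x : E, x ≠ 0 ∧ A₀.N x ≠ ∞ ∧ A₁.N x ≠ ∞)
    (θ θ₀ : ℝ) (hθ : 0 < θ) (hθ' : θ < 1) (hθ₀ : 0 < θ₀) (hθ₀' : θ₀ < 1)
    (q₀ r r₀ r₁ : ℝ≥0∞) (hq₀ : 0 < q₀) (hr : 0 < r) (hr₀ : 0 < r₀) (hr₁ : 0 < r₁)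
    (a b₀ b₁ a₀ : ℝ → ℝ)
    (h_sv_a : SlowlyVarying a)
    (h_sv_b₀ : SlowlyVarying b₀)
    (h_sv_b₁ : SlowlyVarying b₁)
    (h_sv_a₀ : SlowlyVarying a₀)
    (hfin₀ : LqNorm r₀ (Ioo 0 1) (svWgt r₀ (fun s => b₀ s / a₀ s)) ≠ ∞)
    (hfin₁ : LqNorm r₁ (Ioo 0 1) (svWgt r₁ (fun s => b₁ s)) ≠ ∞)
    (c₀ c₁ ρ : ℝ → ℝ)
    (hc₀ : ∀ t, c₀ t = a₀ t * (LqNorm r₀ (Ioo 0 t) (svWgt r₀ (fun s => b₀ s / a₀ s))).toReal)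
    (hc₁ : ∀ t, c₁ t = (LqNorm r₁ (Ioo 0 t) (svWgt r₁ (fun s => b₁ s))).toReal)
    (hρ : ∀ t, ρ t = t ^ (1 - θ₀) * (c₀ t / c₁ t)) :
    EquivNorms
      (normK (normR A₀.N A₁.N θ₀ r₀ q₀ b₀ a₀) (normK A₀.N A₁.N 1 r₁ b₁) θ r a)
      (normK A₀.N A₁.N ((1 - θ) * θ₀ + θ) r
        (fun t => c₀ t ^ (1 - θ) * c₁ t ^ θ * a (ρ t))) := by
  exact main_core A₀ A₁ θ θ₀ hθ hθ' hθ₀ hθ₀' q₀ r r₀ r₁ hq₀ hr hr₀ hr₁ a b₀ b₁ a₀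
    h_sv_a.pot h_sv_b₀.pot h_sv_b₁.pot h_sv_a₀.pot hfin₀ hfin₁ c₀ c₁ ρ hc₀ hc₁ hρ

end
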